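/- arXiv:1406.6825 — 6 statements merged into one kernel-verified Lean document; each statement's English description precedes it below -/
import Mathlib

section
/- Mönch's continuation theorem: Let X be a real Banach space, U an open subset of X, and N : cl(U) → X a continuous map. Assume that for some u₀ ∈ U: (a) for every u in the boundary of U and every real λ > 1, N(u) − u₀ ≠ λ·(u − u₀); and (b) for every countable set C ⊆ cl(U) with C ⊆ closure(convexHull({u₀} ∪ N(C))), the closure of C is compact. Then N has a fixed point in cl(U). -/
section Scarf
set_option linter.unusedSectionVars false
open Finset

variable {T I : Type*} [Fintype T] [Fintype I] [DecidableEq T] [DecidableEq I] [Nonempty T]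

def MDom (r : I → T → ℕ) (σ : Finset T) (C : Finset I) : Prop :=
  ∀ y, ∃ i ∈ C, ∀ x ∈ σ, r i y ≤ r i x

theorem MDom.mono {r : I → T → ℕ} {σ τ : Finset T} {C D : Finset I} (h : MDom r σ C)
    (h1 : τ ⊆ σ) (h2 : C ⊆ D) : MDom r τ D := by
  intro y
  obtain ⟨i, hi, hx⟩ := h y
  exact ⟨i, h2 hi, fun x hxτ => hx x (h1 hxτ)⟩

def MSel (r : I → T → ℕ) (τ : Finset T) (D : Finset I) (d : I) (y : T) : Prop :=
  ∀ i ∈ D, i ≠ d → ∃ x ∈ τ, r i x < r i y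

def MRho (r : I → T → ℕ) (τ : Finset T) (D : Finset I) (d : I) (p : Finset T × Finset I) : Prop :=
  ((∀ y, ¬ MSel r τ D d y) ∧ p = (τ, D.erase d)) ∨
  ∃ y, MSel r τ D d y ∧ (∀ z, MSel r τ D d z → r d z ≤ r d y) ∧ p = (insert y τ, D)

theorem MRho_unique (r : I → T → ℕ) (hr : ∀ i, Function.Injective (r i))
    (τ : Finset T) (D : Finset I) (d : I) : ∃ p, ∀ q, MRho r τ D d q ↔ q = p := by
  classical
  by_cases h : ∀ y, ¬ MSel r τ D d y
  · refine ⟨(τ, D.erase d), fun q => ⟨?_, fun hq => Or.inl ⟨h, hq⟩⟩⟩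
    rintro (⟨_, h2⟩ | ⟨y, hy, _⟩)
    · exact h2
    · exact absurd hy (h y)
  · push Not at h
    obtain ⟨y0, hy0⟩ := h
    obtain ⟨y, hy, hmax⟩ := Finset.exists_max_image (univ.filter (MSel r τ D d)) (r d)
      ⟨y0, by simpa using hy0⟩
    simp only [mem_filter, mem_univ, true_and] at hy hmax
    refine ⟨(insert y τ, D), fun q => ⟨?_, fun hq => Or.inr ⟨y, hy, hmax, hq⟩⟩⟩
    rintro (⟨h1, _⟩ | ⟨z, hz, hz2, rfl⟩)
    · exact absurd hy (h1 y)
    · have : y = z := hr d (le_antisymm (hz2 y hy) (hmax z hz))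
      rw [this]

def MRoom (r : I → T → ℕ) (p : Finset T × Finset I) : Prop :=
  MDom r p.1 p.2 ∧ p.1.card = p.2.card

theorem door_two_rooms (r : I → T → ℕ) (hr : ∀ i, Function.Injective (r i))
    (τ : Finset T) (D : Finset I) (hτ : τ.Nonempty) (hdom : MDom r τ D)
    (hcard : D.card = τ.card + 1) :
    ∃ p q : Finset T × Finset I, p ≠ q ∧
      ∀ s : Finset T × Finset I, (MRoom r s ∧ τ ⊆ s.1 ∧ s.2 ⊆ D) ↔ (s = p ∨ s = q) := by
  classical
  have hmin : ∀ i, ∃ x ∈ τ, ∀ z ∈ τ, r i x ≤ r i z := fun i => exists_min_image τ (r i) hτ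
  choose a haτ hamin using hmin
  have hauniq : ∀ i, ∀ x ∈ τ, (∀ z ∈ τ, r i x ≤ r i z) → a i = x := fun i x hx h =>
    hr i (le_antisymm (hamin i x hx) (h _ (haτ i)))
  have hsel : ∀ d y, MSel r τ D d y ↔ ∀ i ∈ D, i ≠ d → r i (a i) < r i y := by
    intro d y
    refine forall₃_congr fun i _ _ => ⟨?_, fun h => ⟨_, haτ i, h⟩⟩
    rintro ⟨x, hx, h⟩
    exact lt_of_le_of_lt (hamin i x hx) h
  have hsurj : ∀ x ∈ τ, ∃ i ∈ D, a i = x := by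
    intro x hx
    obtain ⟨i, hi, h⟩ := hdom x
    exact ⟨i, hi, hauniq i x hx h⟩
  -- surjectivity on an erased set gives injectivity
  have hinj : ∀ d ∈ D, (∀ x ∈ τ, ∃ i ∈ D, i ≠ d ∧ a i = x) →
      ∀ i ∈ D, ∀ j ∈ D, i ≠ d → j ≠ d → a i = a j → i = j := by
    intro d hd h i hi j hj hid hjd hij
    have himg : (D.erase d).image a = τ := by
      ext x
      simp only [mem_image, mem_erase]
      constructor
      · rintro ⟨i, _, rfl⟩; exact haτ i
      · intro hx
        obtain ⟨i, hi, hid, rfl⟩ := h x hx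
        exact ⟨i, ⟨hid, hi⟩, rfl⟩
    have hc : ((D.erase d).image a).card = (D.erase d).card := by
      rw [himg, card_erase_of_mem hd]; omega
    have := Finset.card_image_iff.1 hc
    exact this (by simp [hi, hid]) (by simp [hj, hjd]) hij
  obtain ⟨d1, hd1, d2, hd2, hne, heq⟩ : ∃ d1 ∈ D, ∃ d2 ∈ D, d1 ≠ d2 ∧ a d1 = a d2 :=
    Finset.exists_ne_map_eq_of_card_lt_of_maps_to (by omega) (fun i _ => haτ i)
  have hpair : ∀ d ∈ D, (∀ x ∈ τ, ∃ i ∈ D, i ≠ d ∧ a i = x) → d = d1 ∨ d = d2 := by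
    intro d hd h
    by_contra! hc
    exact hne (hinj d hd h d1 hd1 d2 hd2 hc.1.symm hc.2.symm heq)
  -- common facts for d in the pair
  have hroom : ∀ d ∈ D, ∀ d' ∈ D, d ≠ d' → a d = a d' → ∀ s, MRho r τ D d s →
      (MRoom r s ∧ τ ⊆ s.1 ∧ s.2 ⊆ D) := by
    rintro d hd d' hd' hdd haa s (⟨hemp, rfl⟩ | ⟨y, hy, hymax, rfl⟩)
    · refine ⟨⟨?_, ?_⟩, subset_rfl, erase_subset _ _⟩
      · intro y
        have := hemp y
        rw [hsel] at this
        push Not at this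
        obtain ⟨i, hi, hid, hle⟩ := this
        exact ⟨i, mem_erase.2 ⟨hid, hi⟩, fun x hx => hle.trans (hamin i x hx)⟩
      · simp only [card_erase_of_mem hd]; omega
    · have hyτ : y ∉ τ := by
        intro hyτ
        obtain ⟨i, hi, rfl⟩ := hsurj y hyτ
        rw [hsel] at hy
        by_cases hid : i = d
        · subst hid
          have := hy d' hd' hdd.symm
          rw [haa] at this
          exact lt_irrefl _ this
        · exact lt_irrefl _ (hy i hi hid)
      refine ⟨⟨?_, ?_⟩, subset_insert _ _, subset_rfl⟩
      · intro z
        by_cases hz : MSel r τ D d z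
        · obtain ⟨i, hi, hx⟩ := hdom z
          have : i = d := by
            by_contra hid
            have h1 := (hsel d z).1 hz i hi hid
            exact absurd (hx _ (haτ i)) (not_le.2 h1)
          subst this
          refine ⟨i, hi, ?_⟩
          intro x hxm
          rcases mem_insert.1 hxm with rfl | hxτ
          · exact hymax z hz
          · exact hx x hxτ
        · rw [hsel] at hz
          push Not at hz
          obtain ⟨i, hi, hid, hle⟩ := hz
          refine ⟨i, hi, ?_⟩
          intro x hxm
          rcases mem_insert.1 hxm with rfl | hxτ
          · exact hle.trans ((hsel d x).1 hy i hi hid).le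
          · exact hle.trans (hamin i x hxτ)
      · simp only [card_insert_of_notMem hyτ]; omega
  have hconv : ∀ s : Finset T × Finset I, (MRoom r s ∧ τ ⊆ s.1 ∧ s.2 ⊆ D) →
      MRho r τ D d1 s ∨ MRho r τ D d2 s := by
    rintro ⟨σ, C⟩ ⟨⟨hD, hc⟩, h1, h2⟩
    simp only at hD hc h1 h2
    have hc1 := card_le_card h1
    have hc2 := card_le_card h2
    suffices ∃ d ∈ D, (∀ x ∈ τ, ∃ i ∈ D, i ≠ d ∧ a i = x) ∧ MRho r τ D d (σ, C) by
      obtain ⟨d, hd, h, h'⟩ := this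
      rcases hpair d hd h with rfl | rfl
      · exact Or.inl h'
      · exact Or.inr h'
    by_cases hcc : σ.card = τ.card
    · have hστ : τ = σ := eq_of_subset_of_card_le h1 hcc.le
      subst hστ
      obtain ⟨d, hdC, hins⟩ : ∃ d, d ∉ C ∧ insert d C = D := by
        have := (Finset.exists_eq_insert_iff (s := C) (t := D)).2 ⟨h2, by omega⟩
        obtain ⟨d, h, h'⟩ := this
        exact ⟨d, h, h'⟩
      have hCe : C = D.erase d := by rw [← hins, erase_insert hdC]
      refine ⟨d, by simp [← hins], ?_, Or.inl ⟨?_, by rw [hCe]⟩⟩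
      · intro x hx
        obtain ⟨i, hi, h⟩ := hD x
        exact ⟨i, h2 hi, fun h => hdC (h ▸ hi), hauniq i x hx h⟩
      · intro y hy
        obtain ⟨i, hi, h⟩ := hD y
        exact absurd (h _ (haτ i)) (not_le.2 ((hsel d y).1 hy i (h2 hi) (fun h => hdC (h ▸ hi))))
    · have hCD : C = D := eq_of_subset_of_card_le h2 (by omega)
      subst hCD
      obtain ⟨y, hyτ, hins⟩ : ∃ y, y ∉ τ ∧ insert y τ = σ := by
        obtain ⟨d, h, h'⟩ := (Finset.exists_eq_insert_iff (s := τ) (t := σ)).2 ⟨h1, by omega⟩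
        exact ⟨d, h, h'⟩
      subst hins
      obtain ⟨d, hd, hdy⟩ := hD y
      have hs : ∀ x ∈ τ, ∃ i ∈ C, i ≠ d ∧ a i = x ∧ r i x < r i y := by
        intro x hx
        obtain ⟨i, hi, h⟩ := hD x
        have hxy : x ≠ y := fun h => hyτ (h ▸ hx)
        have hai := hauniq i x hx (fun z hz => h z (mem_insert_of_mem hz))
        have hlt : r i x < r i y := lt_of_le_of_ne (h y (mem_insert_self _ _)) fun h => hxy (hr i h)
        refine ⟨i, hi, ?_, hai, hlt⟩
        rintro rfl
        exact absurd (hdy x (mem_insert_of_mem hx)) (not_le.2 hlt)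
      have hs' : ∀ x ∈ τ, ∃ i ∈ C, i ≠ d ∧ a i = x := fun x hx => by
        obtain ⟨i, h1, h2, h3, _⟩ := hs x hx
        exact ⟨i, h1, h2, h3⟩
      refine ⟨d, hd, hs', Or.inr ⟨y, ?_, ?_, rfl⟩⟩
      · rw [hsel]
        intro i hi hid
        obtain ⟨j, hj, hjd, haj, hlt⟩ := hs (a i) (haτ i)
        have := hinj d hd hs' j hj i hi hjd hid haj
        subst this
        exact hlt
      · intro z hz
        obtain ⟨i, hi, h⟩ := hD z
        by_cases hid : i = d
        · subst hid
          exact h y (mem_insert_self _ _)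
        · exact absurd (h _ (mem_insert_of_mem (haτ i))) (not_le.2 ((hsel d z).1 hz i hi hid))
  obtain ⟨p, hp⟩ := MRho_unique r hr τ D d1
  obtain ⟨q, hq⟩ := MRho_unique r hr τ D d2
  refine ⟨p, q, ?_, fun s => ⟨fun h => ?_, ?_⟩⟩
  · rintro rfl
    have h1 := (hp p).2 rfl
    have h2 := (hq p).2 rfl
    have hr1 := hroom d1 hd1 d2 hd2 hne heq p h1
    rcases h1 with ⟨e1, f1⟩ | ⟨y, hy, hymax, f1⟩ <;> rcases h2 with ⟨e2, f2⟩ | ⟨z, hz, hzmax, f2⟩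
    · have := congrArg Prod.snd (f1.symm.trans f2)
      simp only at this
      have h3 : d2 ∈ D.erase d1 := mem_erase.2 ⟨hne.symm, hd2⟩
      rw [this] at h3
      simp at h3
    · have := congrArg Prod.snd (f1.symm.trans f2)
      simp only at this
      rw [← this] at hd1
      simp at hd1
    · have := congrArg Prod.snd (f1.symm.trans f2)
      simp only at this
      rw [this] at hd2
      simp at hd2
    · have h3 := congrArg Prod.fst (f1.symm.trans f2)
      simp only at h3
      have hyτ : y ∉ τ := by
        intro h
        have h4 := hr1.1.2
        rw [f1] at h4
        simp only [insert_eq_of_mem h] at h4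
        omega
      have hyz : y = z := by
        have : y ∈ insert z τ := h3 ▸ mem_insert_self y τ
        rcases mem_insert.1 this with h | h
        · exact h
        · exact absurd h hyτ
      subst hyz
      obtain ⟨i, hi, h⟩ := hdom y
      have h5 := h _ (haτ i)
      by_cases hid : i = d1
      · exact absurd h5 (not_le.2 ((hsel d2 y).1 hz i hi (hid ▸ hne)))
      · exact absurd h5 (not_le.2 ((hsel d1 y).1 hy i hi hid))
  · rw [← hp, ← hq]
    exact hconv s h
  · rintro (h | h)
    · exact hroom d1 hd1 d2 hd2 hne heq s ((hp s).2 h)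
    · exact hroom d2 hd2 d1 hd1 hne.symm heq.symm s ((hq s).2 h)

def MDoor (c : T → I) (i0 : I) (p : Finset T × Finset I) : Prop :=
  p.2.card = p.1.card + 1 ∧ i0 ∈ p.2 ∧ p.1.image c = p.2.erase i0

theorem room_two_doors (c : T → I) (i0 : I) (σ : Finset T) (C : Finset I)
    (hcard : σ.card = C.card) (hnf : σ.image c ≠ C) (d : Finset T × Finset I)
    (hd : MDoor c i0 d ∧ d.1 ⊆ σ ∧ C ⊆ d.2) :
    ∃ p q : Finset T × Finset I, p ≠ q ∧
      ∀ s : Finset T × Finset I, (MDoor c i0 s ∧ s.1 ⊆ σ ∧ C ⊆ s.2) ↔ (s = p ∨ s = q) := by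
  classical
  have key : ∀ s : Finset T × Finset I, (MDoor c i0 s ∧ s.1 ⊆ σ ∧ C ⊆ s.2) ↔
      ((i0 ∈ C ∧ ∃ x ∈ σ, s = (σ.erase x, C) ∧ (σ.erase x).image c = C.erase i0) ∨
       (i0 ∈ C ∧ ∃ j, j ∉ C ∧ s = (σ, insert j C) ∧ σ.image c = insert j (C.erase i0))) := by
    rintro ⟨τ, D⟩
    constructor
    · rintro ⟨⟨h1, h2, h3⟩, h4, h5⟩
      simp only at h1 h2 h3 h4 h5
      have hc1 := card_le_card h4
      have hc2 := card_le_card h5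
      by_cases hcc : σ.card = τ.card
      · have hστ : τ = σ := eq_of_subset_of_card_le h4 hcc.le
        subst hστ
        obtain ⟨j, hj, rfl⟩ := (Finset.exists_eq_insert_iff (s := C) (t := D)).2 ⟨h5, by omega⟩
        have hj0 : j ≠ i0 := by
          rintro rfl
          rw [erase_insert hj] at h3
          exact hnf h3
        refine Or.inr ⟨?_, j, hj, rfl, ?_⟩
        · rcases mem_insert.1 h2 with h | h
          · exact absurd h.symm hj0
          · exact h
        · rw [h3, erase_insert_of_ne hj0]
      · have hCD : C = D := eq_of_subset_of_card_le h5 (by omega)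
        subst hCD
        obtain ⟨x, hx, rfl⟩ := (Finset.exists_eq_insert_iff (s := τ) (t := σ)).2 ⟨h4, by omega⟩
        refine Or.inl ⟨h2, x, mem_insert_self _ _, ?_, ?_⟩
        · rw [erase_insert hx]
        · rw [erase_insert hx, h3]
    · rintro (⟨h0, x, hx, h, himg⟩ | ⟨h0, j, hj, h, himg⟩)
      · obtain ⟨rfl, rfl⟩ := Prod.mk.inj h
        refine ⟨⟨?_, h0, himg⟩, erase_subset _ _, subset_rfl⟩
        have := card_erase_add_one hx
        simp only; omega
      · obtain ⟨rfl, rfl⟩ := Prod.mk.inj h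
        have hj0 : j ≠ i0 := fun h => hj (h ▸ h0)
        refine ⟨⟨?_, mem_insert_of_mem h0, ?_⟩, subset_rfl, subset_insert _ _⟩
        · simp only [card_insert_of_notMem hj]; omega
        · simp only [himg, erase_insert_of_ne hj0]
  -- the mixed case
  have mixed : ∀ x ∈ σ, i0 ∈ C → c x ∉ C → (σ.erase x).image c = C.erase i0 →
      ∃ p q : Finset T × Finset I, p ≠ q ∧
      ∀ s : Finset T × Finset I, (MDoor c i0 s ∧ s.1 ⊆ σ ∧ C ⊆ s.2) ↔ (s = p ∨ s = q) := by
    intro x hx h0 hcx himg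
    have himg' : σ.image c = insert (c x) (C.erase i0) := by
      rw [← himg, ← image_insert, insert_erase hx]
    refine ⟨(σ.erase x, C), (σ, insert (c x) C), ?_, fun s => ?_⟩
    · intro h
      have := (Prod.mk.inj h).1
      rw [erase_eq_self] at this
      exact this hx
    · rw [key]
      constructor
      · rintro (⟨_, z, hz, rfl, hzi⟩ | ⟨_, j, hj, rfl, hji⟩)
        · left
          by_cases hzx : z = x
          · rw [hzx]
          · exfalso
            have : c x ∈ (σ.erase z).image c := mem_image_of_mem c (mem_erase.2 ⟨Ne.symm hzx, hx⟩)
            rw [hzi] at this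
            exact hcx (mem_of_mem_erase this)
        · right
          have : c x ∈ insert j (C.erase i0) := hji ▸ mem_image_of_mem c hx
          rcases mem_insert.1 this with h | h
          · rw [h]
          · exact absurd (mem_of_mem_erase h) hcx
      · rintro (rfl | rfl)
        · exact Or.inl ⟨h0, x, hx, rfl, himg⟩
        · exact Or.inr ⟨h0, c x, hcx, rfl, himg'⟩
  rcases (key d).1 hd with ⟨h0, x, hx, -, himg⟩ | ⟨h0, j, hj, -, himg⟩
  · by_cases hcx : c x ∈ C
    · have hx0 : c x ≠ i0 := by
        intro h
        apply hnf
        rw [← insert_erase hx, image_insert, himg, h, insert_erase h0]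
      have : c x ∈ (σ.erase x).image c := by rw [himg]; exact mem_erase.2 ⟨hx0, hcx⟩
      obtain ⟨z, hz, hzx⟩ := mem_image.1 this
      have hzσ := mem_of_mem_erase hz
      have hzne : z ≠ x := ne_of_mem_erase hz
      have hinj : Set.InjOn c (σ.erase x : Finset T) := by
        apply Finset.card_image_iff.1
        rw [himg, card_erase_of_mem h0, card_erase_of_mem hx, hcard]
      have himgσ : σ.image c = C.erase i0 := by
        rw [← insert_erase hx, image_insert, himg, insert_eq_of_mem (mem_erase.2 ⟨hx0, hcx⟩)]
      have himgz : (σ.erase z).image c = C.erase i0 := by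
        rw [← himgσ]
        apply subset_antisymm (image_subset_image (erase_subset _ _))
        intro i hi
        obtain ⟨w, hw, rfl⟩ := mem_image.1 hi
        by_cases hwz : w = z
        · rw [hwz, hzx]
          exact mem_image_of_mem c (mem_erase.2 ⟨hzne.symm, hx⟩)
        · exact mem_image_of_mem c (mem_erase.2 ⟨hwz, hw⟩)
      refine ⟨(σ.erase x, C), (σ.erase z, C), ?_, fun s => ?_⟩
      · intro h
        have h1 := (Prod.mk.inj h).1
        rw [h1] at hz
        simp at hz
      · rw [key]
        constructor
        · rintro (⟨_, w, hw, rfl, hwi⟩ | ⟨_, j, hj, rfl, hji⟩)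
          · by_cases hwx : w = x
            · left; rw [hwx]
            · right
              have : c w ∈ (σ.erase w).image c := by
                rw [hwi, ← himgσ]; exact mem_image_of_mem c hw
              obtain ⟨v, hv, hvw⟩ := mem_image.1 this
              have hvσ := mem_of_mem_erase hv
              have hvne := ne_of_mem_erase hv
              by_cases hvx : v = x
              · have : w = z := hinj (by simp [hwx, hw]) (by simp [hzne, hzσ])
                  (by rw [hzx, ← hvw, hvx])
                rw [this]
              · exact absurd (hinj (by simp [hvx, hvσ]) (by simp [hwx, hw]) hvw) hvne
          · exfalso
            rw [himgσ] at hji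
            have : j ∈ C.erase i0 := by rw [hji]; exact mem_insert_self _ _
            exact hj (mem_of_mem_erase this)
        · rintro (rfl | rfl)
          · exact Or.inl ⟨h0, x, hx, rfl, himg⟩
          · exact Or.inl ⟨h0, z, hzσ, rfl, himgz⟩
    · exact mixed x hx h0 hcx himg
  · have : j ∈ σ.image c := by rw [himg]; exact mem_insert_self _ _
    obtain ⟨x, hx, rfl⟩ := mem_image.1 this
    refine mixed x hx h0 hj ?_
    have hinj : Set.InjOn c σ := by
      apply Finset.card_image_iff.1
      rw [himg, card_insert_of_notMem (fun h => hj (mem_of_mem_erase h)), hcard,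
        card_erase_add_one h0]
    have hnot : c x ∉ (σ.erase x).image c := by
      intro h
      obtain ⟨w, hw, hwx⟩ := mem_image.1 h
      exact ne_of_mem_erase hw (hinj (mem_of_mem_erase hw) hx hwx)
    rw [← insert_erase hx, image_insert] at himg
    have := congrArg (fun S => erase S (c x)) himg
    simpa only [erase_insert hnot, erase_insert (fun h => hj (mem_of_mem_erase h))] using this

theorem scarf (r : I → T → ℕ) (hr : ∀ i, Function.Injective (r i)) (c : T → I) :
    ∃ σ : Finset T, ∃ C : Finset I, MDom r σ C ∧ σ.image c = C := by
  classical
  by_contra hcon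
  push Not at hcon
  let i0 : I := c (Classical.arbitrary T)
  let R : Finset (Finset T × Finset I) := univ.filter (MRoom r)
  let Dr : Finset (Finset T × Finset I) := univ.filter (fun p => MDom r p.1 p.2 ∧ MDoor c i0 p)
  let inc : Finset T × Finset I → Finset T × Finset I → Prop := fun d s => d.1 ⊆ s.1 ∧ s.2 ⊆ d.2
  have hcount := Finset.sum_card_bipartiteAbove_eq_sum_card_bipartiteBelow (s := Dr) (t := R) inc
  have two : ∀ (S : Finset (Finset T × Finset I)), (∃ p q : Finset T × Finset I, p ≠ q ∧
      ∀ s, s ∈ S ↔ (s = p ∨ s = q)) → S.card = 2 := by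
    rintro S ⟨p, q, hpq, h⟩
    rw [Finset.card_eq_two]
    exact ⟨p, q, hpq, by ext s; simp [h]⟩
  have hright : Even (∑ b ∈ R, (Dr.bipartiteBelow inc b).card) := by
    apply Finset.even_sum
    rintro ⟨σ, C⟩ hb
    have hroom : MRoom r (σ, C) := by simpa [R] using hb
    rcases (Dr.bipartiteBelow inc (σ, C)).eq_empty_or_nonempty with h | ⟨d, hd⟩
    · rw [h]; simp
    · have hmem : ∀ s, s ∈ Dr.bipartiteBelow inc (σ, C) ↔
          (MDoor c i0 s ∧ s.1 ⊆ σ ∧ C ⊆ s.2) := by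
        intro s
        simp only [Finset.mem_bipartiteBelow, Dr, mem_filter, mem_univ, true_and, inc]
        constructor
        · rintro ⟨⟨_, h1⟩, h2⟩; exact ⟨h1, h2⟩
        · rintro ⟨h1, h2, h3⟩; exact ⟨⟨hroom.1.mono h2 h3, h1⟩, h2, h3⟩
      rw [two]
      · exact even_two
      · simp only [hmem]
        exact room_two_doors c i0 σ C hroom.2 (hcon σ C hroom.1) d ((hmem d).1 hd)
  have hmemR : ∀ d s, s ∈ R.bipartiteAbove inc d ↔ (MRoom r s ∧ d.1 ⊆ s.1 ∧ s.2 ⊆ d.2) := by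
    intro d s
    simp only [Finset.mem_bipartiteAbove, R, mem_filter, mem_univ, true_and, inc]
  have he : ((∅ : Finset T), ({i0} : Finset I)) ∈ Dr := by
    simp only [Dr, mem_filter, mem_univ, true_and]
    refine ⟨fun y => ⟨i0, by simp, by simp⟩, by simp, by simp, by simp⟩
  have hone : (R.bipartiteAbove inc ((∅ : Finset T), ({i0} : Finset I))).card = 1 := by
    obtain ⟨y, -, hy⟩ := Finset.exists_max_image (univ : Finset T) (r i0) univ_nonempty
    rw [Finset.card_eq_one]
    refine ⟨({y}, {i0}), ?_⟩
    ext ⟨σ, C⟩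
    rw [hmemR, mem_singleton]
    constructor
    · rintro ⟨⟨h1, h2⟩, _, h3⟩
      simp only at h1 h2 h3
      have hC : C = {i0} := by
        rcases subset_singleton_iff.1 h3 with h | h
        · obtain ⟨i, hi, _⟩ := h1 y
          rw [h] at hi
          simp at hi
        · exact h
      subst hC
      rw [card_singleton, Finset.card_eq_one] at h2
      obtain ⟨z, rfl⟩ := h2
      obtain ⟨i, hi, h⟩ := h1 y
      rw [mem_singleton] at hi
      subst hi
      have := hr _ (le_antisymm (h z (mem_singleton_self z)) (hy z (mem_univ z)))
      rw [this]
    · intro h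
      obtain ⟨rfl, rfl⟩ := Prod.mk.inj h
      refine ⟨⟨?_, by simp⟩, by simp, subset_rfl⟩
      intro z
      exact ⟨i0, by simp, by simpa using hy z (mem_univ z)⟩
  rw [← Finset.add_sum_erase _ _ he, hone] at hcount
  have hleft : Even (∑ d ∈ Dr.erase ((∅ : Finset T), ({i0} : Finset I)),
      (R.bipartiteAbove inc d).card) := by
    apply Finset.even_sum
    rintro ⟨τ, D⟩ hd
    rw [mem_erase] at hd
    obtain ⟨hne, hd⟩ := hd
    simp only [Dr, mem_filter, mem_univ, true_and] at hd
    obtain ⟨hdom, h1, h2, h3⟩ := hd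
    rw [two]
    · exact even_two
    · simp only [hmemR]
      apply door_two_rooms r hr τ D _ hdom h1
      rw [nonempty_iff_ne_empty]
      rintro rfl
      apply hne
      simp only [card_empty, zero_add] at h1
      obtain ⟨j, rfl⟩ := Finset.card_eq_one.1 h1
      rw [mem_singleton] at h2
      rw [h2]
  rw [← hcount] at hright
  rw [add_comm, Nat.even_add_one] at hright
  exact hright hleft

end Scarf

theorem brouwer_approx {I : Type*} [Fintype I] [Nonempty I] (f : (I → ℝ) → (I → ℝ))
    (hf : ContinuousOn f (stdSimplex ℝ I)) (hm : Set.MapsTo f (stdSimplex ℝ I) (stdSimplex ℝ I))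
    (ε : ℝ) (hε : 0 < ε) : ∃ x ∈ stdSimplex ℝ I, ∀ i, x i - f x i ≤ ε := by
  classical
  have huc := (isCompact_stdSimplex ℝ I).uniformContinuousOn_of_continuous hf
  rw [Metric.uniformContinuousOn_iff] at huc
  obtain ⟨δ, hδ, huc⟩ := huc (ε / 2) (by positivity)
  set n := Fintype.card I with hn
  obtain ⟨m, hmm⟩ := exists_nat_gt (((n : ℝ) + 1) / min δ (ε / 2))
  have hmin : 0 < min δ (ε / 2) := by positivity
  have hm0 : (0 : ℝ) < m := lt_trans (by positivity) hmm
  have hnm : (n : ℝ) / m < min δ (ε / 2) := by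
    rw [div_lt_iff₀ hmin] at hmm
    rw [div_lt_iff₀ hm0]
    linarith
  let T := {x : I → ℕ // x ∈ Finset.piAntidiag Finset.univ m}
  have hTmem : ∀ x : I → ℕ, x ∈ Finset.piAntidiag Finset.univ m ↔ ∑ i, x i = m := by
    intro x; simp [Finset.mem_piAntidiag]
  have hTsum : ∀ x : T, ∑ i, x.1 i = m := fun x => (hTmem _).1 x.2
  letI : Fintype T := FinsetCoe.fintype _
  have : Nonempty T := ⟨⟨Pi.single (Classical.arbitrary I) m, by rw [hTmem]; simp⟩⟩
  let p : T → I → ℝ := fun x i => (x.1 i : ℝ) / m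
  have hp : ∀ x, p x ∈ stdSimplex ℝ I := by
    intro x
    refine ⟨fun i => by positivity, ?_⟩
    simp only [p]
    rw [← Finset.sum_div, ← Nat.cast_sum, hTsum, div_self hm0.ne']
  have hcol : ∀ x : T, ∃ i, p x i ≤ f (p x) i := by
    intro x
    by_contra! h
    have h1 : ∑ i, f (p x) i < ∑ i, p x i :=
      Finset.sum_lt_sum_of_nonempty Finset.univ_nonempty fun i _ => h i
    rw [(hp x).2, (hm (hp x)).2] at h1
    exact lt_irrefl _ h1
  choose c hc using hcol
  let e := Fintype.equivFin T
  let r : I → T → ℕ := fun i x => x.1 i * Fintype.card T + e x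
  have hrlt : ∀ i x y, x.1 i < y.1 i → r i x < r i y := by
    intro i x y h
    simp only [r]
    have := (e x).2
    nlinarith
  have hr : ∀ i, Function.Injective (r i) := by
    intro i x y h
    rcases lt_trichotomy (x.1 i) (y.1 i) with h1 | h1 | h1
    · exact absurd h (hrlt i x y h1).ne
    · simp only [r, h1] at h
      exact e.injective (Fin.ext (by omega))
    · exact absurd h (hrlt i y x h1).ne'
  obtain ⟨σ, C, hdom, himg⟩ := scarf r hr c
  obtain ⟨i1, hi1, -⟩ := hdom (Classical.arbitrary T)
  have hσ : σ.Nonempty := by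
    rw [← himg] at hi1
    obtain ⟨x, hx, _⟩ := Finset.mem_image.1 hi1
    exact ⟨x, hx⟩
  have hmn : ∀ i, ∃ x ∈ σ, ∀ z ∈ σ, x.1 i ≤ z.1 i :=
    fun i => Finset.exists_min_image σ (fun x => x.1 i) hσ
  choose a haσ hamin using hmn
  let b : I → ℕ := fun i => if i ∈ C then (a i).1 i else 0
  have hbx : ∀ x ∈ σ, ∀ i, b i ≤ x.1 i := by
    intro x hx i
    simp only [b]
    split_ifs
    · exact hamin i x hx
    · exact Nat.zero_le _
  have hbsum : m ≤ ∑ i, b i + n := by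
    by_contra! hlt
    have hs : ∑ i, (b i + 1) = ∑ i, b i + n := by
      rw [Finset.sum_add_distrib]; simp [hn]
    let y : I → ℕ := fun i => b i + 1 + if i = i1 then m - (∑ i, b i + n) else 0
    have hy : ∑ i, y i = m := by
      simp only [y]
      rw [Finset.sum_add_distrib, hs]
      simp
      omega
    obtain ⟨i, hi, h⟩ := hdom ⟨y, (hTmem y).2 hy⟩
    have h1 := h (a i) (haσ i)
    have h2 : (a i).1 i < y i := by
      simp only [y, b, hi, if_true]
      omega
    exact absurd h1 (not_le.2 (hrlt i (a i) ⟨y, _⟩ h2))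
  have hclose : ∀ x ∈ σ, ∀ i, x.1 i ≤ b i + n := by
    intro x hx i
    have h1 := hTsum x
    rw [← Finset.add_sum_erase _ _ (Finset.mem_univ i)] at h1 hbsum
    have h2 : ∑ j ∈ Finset.univ.erase i, b j ≤ ∑ j ∈ Finset.univ.erase i, x.1 j :=
      Finset.sum_le_sum fun j _ => hbx x hx j
    omega
  have hd : ∀ x ∈ σ, ∀ z ∈ σ, ∀ i, p x i - p z i ≤ (n : ℝ) / m := by
    intro x hx z hz i
    simp only [p]
    rw [← sub_div]
    apply div_le_div_of_nonneg_right _ hm0.le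
    have h1 := hclose x hx i
    have h2 := hbx z hz i
    have : (x.1 i : ℝ) ≤ z.1 i + n := by exact_mod_cast h1.trans (by omega)
    linarith
  obtain ⟨x, hx⟩ := hσ
  refine ⟨p x, hp x, fun i => ?_⟩
  have hm1 := min_le_left δ (ε / 2)
  have hm2 := min_le_right δ (ε / 2)
  by_cases hi : i ∈ C
  · rw [← himg] at hi
    obtain ⟨z, hz, rfl⟩ := Finset.mem_image.1 hi
    have h1 := hc z
    have hdist : dist (p x) (p z) < δ := by
      refine lt_of_le_of_lt ?_ (hnm.trans_le hm1)
      rw [dist_pi_le_iff (by positivity)]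
      intro i
      rw [Real.dist_eq, abs_le]
      have := hd x hx z hz i
      have := hd z hz x hx i
      constructor <;> linarith
    have h2 := huc _ (hp x) _ (hp z) hdist
    have h3 := (dist_le_pi_dist (f (p x)) (f (p z)) (c z)).trans_lt h2
    rw [Real.dist_eq, abs_lt] at h3
    have := hd x hx z hz (c z)
    linarith [h3.1]
  · have h1 := hclose x hx i
    simp only [b, hi, if_false, zero_add] at h1
    have h2 : p x i ≤ (n : ℝ) / m := by
      simp only [p]
      apply div_le_div_of_nonneg_right _ hm0.le
      exact_mod_cast h1
    have := (hm (hp x)).1 i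
    linarith

theorem schauder {X : Type*} [NormedAddCommGroup X] [NormedSpace ℝ X] (K : Set X)
    (hK : IsCompact K) (hconv : Convex ℝ K) (hne : K.Nonempty) (F : X → X)
    (hF : ContinuousOn F K) (hm : Set.MapsTo F K K) : ∃ x ∈ K, F x = x := by
  classical
  obtain ⟨x0, hx0, hmin⟩ := hK.exists_isMinOn hne (hF.sub continuousOn_id).norm
  refine ⟨x0, hx0, ?_⟩
  by_contra hfx
  set η := ‖F x0 - x0‖ with hη
  have hηpos : 0 < η := norm_pos_iff.2 (sub_ne_zero.2 hfx)
  have hbig : ∀ x ∈ K, η ≤ ‖F x - x‖ := fun x hx => hmin hx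
  obtain ⟨t, htK, htfin, hcov⟩ := Metric.totallyBounded_iff.1 hK.totallyBounded |> fun h =>
    hK.finite_cover_balls (e := η / 2) (by positivity)
  letI : Fintype t := htfin.fintype
  have hcov' : ∀ x ∈ K, ∃ i : t, ‖x - i‖ < η / 2 := by
    intro x hx
    have := hcov hx
    simp only [Set.mem_iUnion, Metric.mem_ball, dist_eq_norm] at this
    obtain ⟨i, hi, h⟩ := this
    exact ⟨⟨i, hi⟩, h⟩
  have : Nonempty t := by
    obtain ⟨i, _⟩ := hcov' x0 hx0
    exact ⟨i⟩
  let w : t → X → ℝ := fun i x => max 0 (η / 2 - ‖x - i‖)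
  let W : X → ℝ := fun x => ∑ i, w i x
  have hw0 : ∀ i x, 0 ≤ w i x := fun i x => le_max_left _ _
  have hWpos : ∀ x ∈ K, 0 < W x := by
    intro x hx
    obtain ⟨i, hi⟩ := hcov' x hx
    apply Finset.sum_pos' (fun i _ => hw0 i x)
    exact ⟨i, Finset.mem_univ _, lt_max_of_lt_right (by linarith)⟩
  have hwc : ∀ i, Continuous (w i) := fun i => by fun_prop
  have hWc : Continuous W := by fun_prop
  let g : (t → ℝ) → X := fun s => ∑ i, s i • (i : X)
  have hgc : Continuous g := by fun_prop
  have hgK : Set.MapsTo g (stdSimplex ℝ t) K := fun s hs =>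
    hconv.sum_mem (fun i _ => hs.1 i) hs.2 (fun i _ => htK i.2)
  let f : (t → ℝ) → (t → ℝ) := fun s i => w i (F (g s)) / W (F (g s))
  have hFg : ContinuousOn (fun s => F (g s)) (stdSimplex ℝ t) :=
    hF.comp hgc.continuousOn hgK
  have hfm : Set.MapsTo f (stdSimplex ℝ t) (stdSimplex ℝ t) := by
    intro s hs
    have hpos := hWpos _ (hm (hgK hs))
    refine ⟨fun i => div_nonneg (hw0 _ _) hpos.le, ?_⟩
    simp only [f]
    rw [← Finset.sum_div]
    exact div_self hpos.ne'
  have hfc : ContinuousOn f (stdSimplex ℝ t) := by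
    rw [continuousOn_pi]
    intro i
    exact ((hwc i).comp_continuousOn hFg).div (hWc.comp_continuousOn hFg)
      fun s hs => (hWpos _ (hm (hgK hs))).ne'
  let M : ℝ := ∑ i : t, ‖(i : X)‖
  have hM : 0 ≤ M := Finset.sum_nonneg fun i _ => norm_nonneg _
  let n : ℝ := Fintype.card t
  have hn : 0 ≤ n := Nat.cast_nonneg _
  let ε : ℝ := η / (4 * ((n + 1) * (M + 1)))
  have hε : 0 < ε := by positivity
  obtain ⟨s, hs, hsε⟩ := brouwer_approx f hfc hfm ε hε
  have habs : ∀ i, |s i - f s i| ≤ (n + 1) * ε := by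
    intro i
    rw [abs_le]
    constructor
    · have h1 : ∑ j, (s j - f s j) = 0 := by
        rw [Finset.sum_sub_distrib, hs.2, (hfm hs).2, sub_self]
      rw [← Finset.add_sum_erase _ _ (Finset.mem_univ i)] at h1
      have h2 : ∑ j ∈ Finset.univ.erase i, (s j - f s j) ≤ n * ε := by
        calc _ ≤ ∑ j ∈ Finset.univ.erase i, ε := Finset.sum_le_sum fun j _ => hsε j
          _ ≤ ∑ j : t, ε := Finset.sum_le_sum_of_subset_of_nonneg (Finset.erase_subset _ _)
              fun _ _ _ => hε.le
          _ = n * ε := by simp [n]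
      nlinarith
    · have := hsε i
      nlinarith [mul_nonneg hn hε.le]
  have hx := hgK hs
  have hpos := hWpos _ (hm hx)
  have h1 : ‖g s - g (f s)‖ ≤ η / 4 := by
    have : g s - g (f s) = ∑ i, (s i - f s i) • (i : X) := by
      simp only [g, sub_smul, Finset.sum_sub_distrib]
    rw [this]
    calc _ ≤ ∑ i, ‖(s i - f s i) • (i : X)‖ := norm_sum_le _ _
      _ ≤ ∑ i : t, (n + 1) * ε * ‖(i : X)‖ := Finset.sum_le_sum fun i _ => by
          rw [norm_smul, Real.norm_eq_abs]
          exact mul_le_mul_of_nonneg_right (habs i) (norm_nonneg _)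
      _ = (n + 1) * ε * M := by rw [Finset.mul_sum]
      _ ≤ (n + 1) * ε * (M + 1) := by
          apply mul_le_mul_of_nonneg_left (by linarith) (by positivity)
      _ = η / 4 := by
          simp only [ε]
          field_simp
  have h2 : ‖F (g s) - g (f s)‖ ≤ η / 2 := by
    have hsum := (hfm hs).2
    have : F (g s) - g (f s) = ∑ i, f s i • (F (g s) - (i : X)) := by
      simp only [smul_sub, Finset.sum_sub_distrib]
      rw [← Finset.sum_smul, hsum, one_smul]
    rw [this]
    calc _ ≤ ∑ i, ‖f s i • (F (g s) - (i : X))‖ := norm_sum_le _ _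
      _ ≤ ∑ i, f s i * (η / 2) := Finset.sum_le_sum fun i _ => by
          rw [norm_smul, Real.norm_eq_abs, abs_of_nonneg ((hfm hs).1 i)]
          by_cases h : ‖F (g s) - (i : X)‖ ≤ η / 2
          · exact mul_le_mul_of_nonneg_left h ((hfm hs).1 i)
          · have : f s i = 0 := by
              have : w i (F (g s)) = 0 := max_eq_left (by linarith)
              simp only [f, this, zero_div]
            rw [this]; simp
      _ = η / 2 := by rw [← Finset.sum_mul, hsum, one_mul]
  have h3 := hbig _ hx
  have h4 : ‖F (g s) - g s‖ ≤ ‖F (g s) - g (f s)‖ + ‖g s - g (f s)‖ := by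
    have : F (g s) - g s = (F (g s) - g (f s)) - (g s - g (f s)) := by abel
    rw [this]
    exact norm_sub_le _ _
  linarith

/-- **Mönch's continuation theorem.**  Let `X` be a real Banach space, `U` an open subset
of `X`, and `N : cl U → X` continuous (modelled as a map `N : X → X` continuous on the
closure of `U`).  If for some `u₀ ∈ U`
(a) `N u - u₀ ≠ λ • (u - u₀)` for every `u` in the boundary of `U` and every real `λ > 1`, and
(b) every countable `C ⊆ cl U` with `C ⊆ closure (convexHull ({u₀} ∪ N '' C))` has compact
closure, then `N` has a fixed point in `cl U`. -/
theorem stmt_0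
    {X : Type*} [NormedAddCommGroup X] [NormedSpace ℝ X] [CompleteSpace X]
    (U : Set X) (hU : IsOpen U)
    (N : X → X) (hNcont : ContinuousOn N (closure U))
    (u₀ : X) (hu₀ : u₀ ∈ U)
    (ha : ∀ u ∈ frontier U, ∀ lam : ℝ, 1 < lam → N u - u₀ ≠ lam • (u - u₀))
    (hb : ∀ C : Set X, C ⊆ closure U → C.Countable →
      C ⊆ closure (convexHull ℝ ({u₀} ∪ N '' C)) → IsCompact (closure C)) :
    ∃ u ∈ closure U, N u = u := by
  by_contra hcon
  push Not at hcon
  -- the solution set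
  let S : Set X := {u | u ∈ closure U ∧ ∃ l ∈ Set.Icc (0 : ℝ) 1, u = u₀ + l • (N u - u₀)}
  have hSclosed : IsClosed S := by
    let Q : Set (unitInterval × X) := {p | p.2 ∈ closure U} ∩
      (fun p : unitInterval × X => u₀ + (p.1 : ℝ) • (N p.2 - u₀) - p.2) ⁻¹' {0}
    have hcl : IsClosed {p : unitInterval × X | p.2 ∈ closure U} :=
      isClosed_closure.preimage continuous_snd
    have hQ : IsClosed Q := by
      refine ContinuousOn.preimage_isClosed_of_isClosed ?_ hcl isClosed_singleton
      have hN2 : ContinuousOn (fun p : unitInterval × X => N p.2) {p | p.2 ∈ closure U} :=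
        hNcont.comp continuous_snd.continuousOn fun p hp => hp
      have h1 : ContinuousOn (fun p : unitInterval × X => (p.1 : ℝ)) {p | p.2 ∈ closure U} := by
        fun_prop
      exact (continuousOn_const.add (h1.smul (hN2.sub continuousOn_const))).sub
        continuous_snd.continuousOn
    have hSQ : S = Prod.snd '' Q := by
      ext u
      constructor
      · rintro ⟨hu, l, hl, h⟩
        exact ⟨(⟨l, hl⟩, u), ⟨hu, sub_eq_zero.2 h.symm⟩, rfl⟩
      · rintro ⟨⟨l, v⟩, ⟨hv, h⟩, rfl⟩
        exact ⟨hv, l, l.2, (sub_eq_zero.1 h).symm⟩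
    rw [hSQ]
    exact isClosedMap_snd_of_compactSpace _ hQ
  have hdisj : Disjoint Uᶜ S := by
    rw [Set.disjoint_left]
    rintro u huU ⟨hu, l, ⟨hl0, hl1⟩, h⟩
    have hfr : u ∈ frontier U := by
      rw [hU.frontier_eq]
      exact ⟨hu, huU⟩
    rcases hl0.eq_or_lt with rfl | hl0
    · rw [zero_smul, add_zero] at h
      exact huU (h ▸ hu₀)
    rcases hl1.eq_or_lt with rfl | hl1
    · rw [one_smul, add_sub_cancel] at h
      exact hcon u hu h.symm
    · refine ha u hfr l⁻¹ ((one_lt_inv₀ hl0).2 hl1) ?_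
      have h2 : u - u₀ = l • (N u - u₀) := by
        rw [sub_eq_iff_eq_add']
        exact h
      rw [h2, smul_smul, inv_mul_cancel₀ hl0.ne', one_smul]
  obtain ⟨φ, hφ0, hφ1, hφ⟩ := exists_continuous_zero_one_of_isClosed hU.isClosed_compl hSclosed hdisj
  let F : X → X := fun x => u₀ + φ x • (N x - u₀)
  have hFout : ∀ x, x ∉ U → F x = u₀ := by
    intro x hx
    have : φ x = 0 := hφ0 hx
    simp [F, this]
  have hFcont : Continuous F := by
    have h1 : ContinuousOn F (closure U) :=
      continuousOn_const.add (φ.continuous.continuousOn.smul (hNcont.sub continuousOn_const))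
    have h2 : ContinuousOn F Uᶜ := (continuousOn_const (c := u₀)).congr fun x hx => hFout x hx
    have h3 := h1.union_of_isClosed h2 isClosed_closure hU.isClosed_compl
    rw [← continuousOn_univ]
    refine h3.mono fun x _ => ?_
    by_cases hx : x ∈ U
    · exact Or.inl (subset_closure hx)
    · exact Or.inr hx
  have hFfix : ∀ x, F x ≠ x := by
    intro x hx
    by_cases hxU : x ∈ U
    · have hxS : x ∈ S := ⟨subset_closure hxU, φ x, hφ x, hx.symm⟩
      have h1 : φ x = 1 := hφ1 hxS
      apply hcon x (subset_closure hxU)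
      simpa [F, h1] using hx
    · rw [hFout x hxU] at hx
      exact hxU (hx ▸ hu₀)
  -- compactness condition for `F`
  have hFb : ∀ C : Set X, C.Countable → C ⊆ closure (convexHull ℝ ({u₀} ∪ F '' C)) →
      IsCompact (closure C) := by
    intro C hC hCsub
    have hsub : closure (convexHull ℝ ({u₀} ∪ F '' C)) ⊆
        closure (convexHull ℝ ({u₀} ∪ N '' (C ∩ U))) := by
      apply closure_mono
      apply convexHull_min _ (convex_convexHull ℝ _)
      have hu : u₀ ∈ convexHull ℝ ({u₀} ∪ N '' (C ∩ U)) :=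
        subset_convexHull ℝ _ (Or.inl rfl)
      rintro z (rfl | ⟨x, hx, rfl⟩)
      · exact hu
      · by_cases hxU : x ∈ U
        · have hNx : N x ∈ convexHull ℝ ({u₀} ∪ N '' (C ∩ U)) :=
            subset_convexHull ℝ _ (Or.inr ⟨x, ⟨hx, hxU⟩, rfl⟩)
          exact (convex_convexHull ℝ _).add_smul_sub_mem hu hNx (hφ x)
        · rw [hFout x hxU]
          exact hu
    have hcl : C ∩ U ⊆ closure U := fun x hx => subset_closure hx.2
    have hcomp := hb (C ∩ U) hcl (hC.mono Set.inter_subset_left)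
      (fun x hx => hsub (hCsub hx.1))
    have hNc : IsCompact (N '' closure (C ∩ U)) :=
      hcomp.image_of_continuousOn (hNcont.mono (closure_minimal hcl isClosed_closure))
    have htb : TotallyBounded ({u₀} ∪ N '' (C ∩ U)) := by
      refine ((isCompact_singleton (x := u₀)).union hNc).totallyBounded.subset ?_
      exact Set.union_subset_union_right _ (Set.image_mono subset_closure)
    have hK : IsCompact (closure (convexHull ℝ ({u₀} ∪ N '' (C ∩ U)))) :=
      TotallyBounded.isCompact_of_isClosed htb.convexHull.closure isClosed_closure
    exact hK.of_isClosed_subset isClosed_closure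
      (closure_minimal (hCsub.trans hsub) isClosed_closure)
  -- the iteration
  let D : ℕ → Set X := fun n => Nat.rec {u₀} (fun _ A => convexHull ℝ ({u₀} ∪ F '' A)) n
  have hD0 : D 0 = {u₀} := rfl
  have hDs : ∀ n, D (n + 1) = convexHull ℝ ({u₀} ∪ F '' D n) := fun n => rfl
  have hDmono : Monotone D := by
    apply monotone_nat_of_le_succ
    intro n
    induction n with
    | zero =>
      rw [hDs, hD0]
      exact Set.subset_union_left.trans (subset_convexHull ℝ _)
    | succ n ih =>
      rw [hDs (n + 1), hDs n]
      exact convexHull_mono (Set.union_subset_union_right _ (Set.image_mono ih))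
  have hDconv : ∀ n, Convex ℝ (D n) := by
    intro n
    cases n with
    | zero => exact convex_singleton u₀
    | succ n => exact convex_convexHull ℝ _
  have hDsep : ∀ n, TopologicalSpace.IsSeparable (D n) := by
    intro n
    induction n with
    | zero => exact (Set.countable_singleton u₀).isSeparable
    | succ n ih =>
      have h1 : TopologicalSpace.IsSeparable ({u₀} ∪ F '' D n) :=
        (Set.countable_singleton u₀).isSeparable.union (ih.image hFcont)
      refine (h1.span (R := ℝ)).mono ?_
      exact convexHull_min Submodule.subset_span (Submodule.convex _)
  let E : Set X := ⋃ n, D n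
  have hEconv : Convex ℝ E := hDmono.directed_le.convex_iUnion fun n => hDconv n
  have hEsub : E ⊆ convexHull ℝ ({u₀} ∪ F '' E) := by
    intro x hx
    obtain ⟨n, hn⟩ := Set.mem_iUnion.1 hx
    have h1 := hDmono (Nat.le_succ n) hn
    rw [Nat.succ_eq_add_one, hDs] at h1
    exact convexHull_mono (Set.union_subset_union_right _
      (Set.image_mono (Set.subset_iUnion D n))) h1
  have hEF : Set.MapsTo F E E := by
    intro x hx
    obtain ⟨n, hn⟩ := Set.mem_iUnion.1 hx
    refine Set.mem_iUnion.2 ⟨n + 1, ?_⟩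
    rw [hDs]
    exact subset_convexHull ℝ _ (Or.inr ⟨x, hn, rfl⟩)
  have hEsep : TopologicalSpace.IsSeparable E := TopologicalSpace.IsSeparable.iUnion hDsep
  obtain ⟨C, hCE, hCc, hEC⟩ := hEsep.exists_countable_dense_subset
  have hCsub : C ⊆ closure (convexHull ℝ ({u₀} ∪ F '' C)) := by
    refine (hCE.trans hEsub).trans ?_
    apply convexHull_min _ (convex_convexHull ℝ _).closure
    rintro z (rfl | ⟨x, hx, rfl⟩)
    · exact subset_closure (subset_convexHull ℝ _ (Or.inl rfl))
    · have h1 : F x ∈ closure (F '' C) :=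
        image_closure_subset_closure_image hFcont ⟨x, hEC hx, rfl⟩
      exact closure_mono (Set.subset_union_right.trans (subset_convexHull ℝ _)) h1
  have hcomp := hFb C hCc hCsub
  have hEcl : closure E = closure C :=
    subset_antisymm (closure_minimal hEC isClosed_closure) (closure_mono hCE)
  obtain ⟨x, -, hx⟩ := schauder (closure E) (hEcl ▸ hcomp) hEconv.closure
    ⟨u₀, subset_closure (Set.mem_iUnion.2 ⟨0, rfl⟩)⟩ F hFcont.continuousOn
    (hEF.closure hFcont)
  exact hFfix x hx
end

section
/- Bihari-type comparison (key step in the proof of Lemma 2.2): Let a > 0, M > 0, λ ∈ (0,1), r ≥ 0, let R : [0,a] → ℝ be continuous with R(t) > 0 for all t and r < min_{t∈[0,a]} R(t), let δ ∈ L¹(0,a) be nonnegative, and let ψ : [0,∞) → [0,∞) be continuous, nondecreasing, with ψ(s) > 0 for s > 0. Assume ∫_r^{R(t)} dτ/ψ(τ) ≥ M·∫₀ᵗ δ(s) ds for all t ∈ [0,a]. Let w : [0,a] → ℝ be measurable with δ·w integrable, and define c(t) = λ·r + λ·M·∫₀ᵗ δ(s)w(s) ds. If 0 ≤ w(s) ≤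 ψ(c(s)) for a.e. s ∈ [0,a], then c(t) < R(t) for every t ∈ [0,a]. -/
open MeasureTheory

/-- Local-to-global step of the comparison argument, by continuous induction. -/
theorem bihari_aux {s t L K : ℝ} (hst : s ≤ t) (hL : 0 ≤ L) (hK : 1 < K)
    (δ c ψ D : ℝ → ℝ)
    (hD : ContinuousOn D (Set.Icc s t))
    (hcc : ContinuousOn c (Set.Icc s t)) (hcm : MonotoneOn c (Set.Icc s t))
    (hcs : 0 < c s)
    (hψc : ContinuousOn ψ (Set.Ici 0)) (hψm : MonotoneOn ψ (Set.Ici 0))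
    (hψpos : ∀ s : ℝ, 0 < s → 0 < ψ s)
    (hDm : MonotoneOn D (Set.Icc s t))
    (hloc : ∀ x ∈ Set.Icc s t, ∀ y ∈ Set.Icc s t, x ≤ y →
      c y - c x ≤ L * ψ (c y) * (D y - D x)) :
    ∫ τ in (c s)..(c t), (ψ τ)⁻¹ ≤ K * L * (D t - D s) := by
  have hsm : s ∈ Set.Icc s t := ⟨le_rfl, hst⟩
  have htm : t ∈ Set.Icc s t := ⟨hst, le_rfl⟩
  have hcp : ∀ x ∈ Set.Icc s t, 0 < c x := fun x hx => hcs.trans_le (hcm hsm hx hx.1)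
  have hgc : ContinuousOn (fun τ => (ψ τ)⁻¹) (Set.Ioi 0) :=
    (hψc.mono Set.Ioi_subset_Ici_self).inv₀ (fun x hx => (hψpos x hx).ne')
  have hgi : ∀ u v : ℝ, 0 < u → 0 < v →
      IntervalIntegrable (fun τ => (ψ τ)⁻¹) volume u v := by
    intro u v hu hv
    apply ContinuousOn.intervalIntegrable
    refine hgc.mono ?_
    intro x hx
    exact lt_of_lt_of_le (lt_min hu hv) hx.1
  have hFc : ContinuousOn (fun x => ∫ τ in (c s)..x, (ψ τ)⁻¹) (Set.Icc (c s) (c t)) := by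
    have h := intervalIntegral.continuousOn_primitive_interval (μ := volume)
      (f := fun τ => (ψ τ)⁻¹) (a := c s) (b := c t) (by
        have := (hgi (c s) (c t) hcs (hcp t htm))
        rw [intervalIntegrable_iff'] at this
        exact this)
    rwa [Set.uIcc_of_le (hcm hsm htm hst)] at h
  have hGc : ContinuousOn (fun x => ∫ τ in (c s)..(c x), (ψ τ)⁻¹) (Set.Icc s t) :=
    hFc.comp hcc (fun x hx => ⟨hcm hsm hx hx.1, hcm hx htm hx.2⟩)
  let S : Set ℝ := {x | ∫ τ in (c s)..(c x), (ψ τ)⁻¹ ≤ K * L * (D x - D s)}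
  have hcl : IsClosed (S ∩ Set.Icc s t) := by
    have h2 : ContinuousOn (fun x => K * L * (D x - D s)) (Set.Icc s t) := by fun_prop
    have := isClosed_Icc.isClosed_le hGc h2
    convert this using 1
    ext x
    simp only [S, Set.mem_inter_iff, Set.mem_setOf_eq]
    tauto
  have hsS : s ∈ S := by simp [S]
  have hsub : Set.Icc s t ⊆ S := by
    refine hcl.Icc_subset_of_forall_exists_gt hsS ?_
    rintro x ⟨hxS, hx⟩ y hy
    have hxI : x ∈ Set.Icc s t := ⟨hx.1, hx.2.le⟩
    have hpx := hψpos _ (hcp x hxI)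
    have hcont : ContinuousWithinAt (fun z => ψ (c z)) (Set.Icc s t) x :=
      (hψc.comp hcc (fun z hz => (hcp z hz).le)) x hxI
    have hev : ∀ᶠ z in nhdsWithin x (Set.Icc s t), ψ (c z) < K * ψ (c x) :=
      hcont.eventually_lt_const (by nlinarith)
    have hev2 : ∀ᶠ z in nhdsWithin x (Set.Ioi x), ψ (c z) < K * ψ (c x) := by
      have : nhdsWithin x (Set.Ioi x) ≤ nhdsWithin x (Set.Icc s t) := by
        rw [← nhdsWithin_Ioc_eq_nhdsGT hx.2]
        exact nhdsWithin_mono _ (fun z hz => ⟨hx.1.trans hz.1.le, hz.2⟩)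
      exact this hev
    have hev3 : ∀ᶠ z in nhdsWithin x (Set.Ioi x), z ∈ Set.Ioc x (min y t) :=
      Ioc_mem_nhdsGT (lt_min hy hx.2)
    obtain ⟨z, hz1, hz2⟩ := (hev2.and hev3).exists
    refine ⟨z, ?_, hz2.1, hz2.2.trans (min_le_left _ _)⟩
    have hzI : z ∈ Set.Icc s t := ⟨hx.1.trans hz2.1.le, hz2.2.trans (min_le_right _ _)⟩
    have hxz : c x ≤ c z := hcm hxI hzI hz2.1.le
    have hDz := hDm hxI hzI hz2.1.le
    have hsplit := intervalIntegral.integral_add_adjacent_intervals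
      (hgi (c s) (c x) hcs (hcp x hxI)) (hgi (c x) (c z) (hcp x hxI) (hcp z hzI))
    have hb : ∫ τ in (c x)..(c z), (ψ τ)⁻¹ ≤ (c z - c x) * (ψ (c x))⁻¹ := by
      have := intervalIntegral.integral_mono_on hxz (hgi (c x) (c z) (hcp x hxI) (hcp z hzI))
        (intervalIntegrable_const (c := (ψ (c x))⁻¹)) (by
          intro τ hτ
          exact inv_anti₀ hpx (hψm (hcp x hxI).le ((hcp x hxI).le.trans hτ.1) hτ.1))
      simpa using this
    have hb2 : (c z - c x) * (ψ (c x))⁻¹ ≤ K * L * (D z - D x) := by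
      rw [← div_eq_mul_inv, div_le_iff₀ hpx]
      have h1 := hloc x hxI z hzI hz2.1.le
      have h2 : ψ (c z) * (L * (D z - D x)) ≤ K * ψ (c x) * (L * (D z - D x)) :=
        mul_le_mul_of_nonneg_right hz1.le (mul_nonneg hL (by linarith))
      linarith
    have hxS' : ∫ τ in (c s)..(c x), (ψ τ)⁻¹ ≤ K * L * (D x - D s) := hxS
    change ∫ τ in (c s)..(c z), (ψ τ)⁻¹ ≤ K * L * (D z - D s)
    rw [← hsplit]
    linarith
  exact hsub htm

/-- **Bihari-type comparison (key step in the proof of Lemma 2.2).** If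
`∫_r^{R(t)} dτ/ψ(τ) ≥ M·∫₀ᵗ δ(s) ds` on `[0,a]`, `c(t) = λr + λM·∫₀ᵗ δ(s)w(s) ds` with
`λ ∈ (0,1)` and `0 ≤ w(s) ≤ ψ(c(s))` a.e., then `c(t) < R(t)` on `[0,a]`. -/
theorem stmt_10
    {a M lam r : ℝ} (ha : 0 < a) (hM : 0 < M) (hlam0 : 0 < lam) (hlam1 : lam < 1)
    (hr : 0 ≤ r)
    (R : ℝ → ℝ) (hRc : ContinuousOn R (Set.Icc 0 a))
    (hRpos : ∀ t ∈ Set.Icc (0:ℝ) a, 0 < R t)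
    (hrR : ∀ t ∈ Set.Icc (0:ℝ) a, r < R t)
    (δ : ℝ → ℝ) (hδint : IntegrableOn δ (Set.Icc 0 a)) (hδ0 : ∀ t, 0 ≤ δ t)
    (ψ : ℝ → ℝ) (hψc : ContinuousOn ψ (Set.Ici 0)) (hψm : MonotoneOn ψ (Set.Ici 0))
    (hψ0 : ∀ s : ℝ, 0 ≤ s → 0 ≤ ψ s) (hψpos : ∀ s : ℝ, 0 < s → 0 < ψ s)
    (hBihari : ∀ t ∈ Set.Icc (0:ℝ) a,
      M * (∫ s in (0:ℝ)..t, δ s) ≤ ∫ τ in r..(R t), (ψ τ)⁻¹)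
    (w : ℝ → ℝ) (hwmeas : Measurable w)
    (hwint : IntegrableOn (fun s => δ s * w s) (Set.Icc 0 a))
    (c : ℝ → ℝ) (hc : ∀ t, c t = lam * r + lam * M * ∫ s in (0:ℝ)..t, δ s * w s)
    (hw : ∀ᵐ s ∂(volume.restrict (Set.Icc 0 a)), 0 ≤ w s ∧ w s ≤ ψ (c s)) :
    ∀ t ∈ Set.Icc (0:ℝ) a, c t < R t := by
  have hcr : ∀ f : ℝ → ℝ, IntegrableOn f (Set.Icc 0 a) → ∀ x ∈ Set.Icc (0:ℝ) a,
      ∀ y ∈ Set.Icc (0:ℝ) a, IntervalIntegrable f volume x y := by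
    intro f hf x hx y hy
    rw [intervalIntegrable_iff']
    exact hf.mono_set (Set.uIcc_subset_Icc hx hy)
  have h0 : (0:ℝ) ∈ Set.Icc (0:ℝ) a := ⟨le_rfl, ha.le⟩
  have hprim : ∀ f : ℝ → ℝ, IntegrableOn f (Set.Icc 0 a) →
      ContinuousOn (fun x => ∫ s in (0:ℝ)..x, f s) (Set.Icc 0 a) := by
    intro f hf
    have h := intervalIntegral.continuousOn_primitive_interval (μ := volume)
      (f := f) (a := 0) (b := a) (by rwa [Set.uIcc_of_le ha.le])
    rwa [Set.uIcc_of_le ha.le] at h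
  have hDc := hprim δ hδint
  have hcc : ContinuousOn c (Set.Icc 0 a) := by
    have h := hprim _ hwint
    have h2 : ContinuousOn (fun t => lam * r + lam * M * ∫ s in (0:ℝ)..t, δ s * w s)
      (Set.Icc 0 a) := continuousOn_const.add (continuousOn_const.mul h)
    exact h2.congr (fun t _ => hc t)
  have hdiff : ∀ f : ℝ → ℝ, IntegrableOn f (Set.Icc 0 a) → ∀ x ∈ Set.Icc (0:ℝ) a,
      ∀ y ∈ Set.Icc (0:ℝ) a,
      (∫ s in (0:ℝ)..y, f s) - (∫ s in (0:ℝ)..x, f s) = ∫ s in x..y, f s := by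
    intro f hf x hx y hy
    exact intervalIntegral.integral_interval_sub_left (hcr f hf 0 h0 y hy) (hcr f hf 0 h0 x hx)
  have hcd : ∀ x ∈ Set.Icc (0:ℝ) a, ∀ y ∈ Set.Icc (0:ℝ) a,
      c y - c x = lam * M * ∫ s in x..y, δ s * w s := by
    intro x hx y hy
    rw [hc, hc, ← hdiff _ hwint x hx y hy]
    ring
  have hlM : 0 < lam * M := mul_pos hlam0 hM
  have hDm : MonotoneOn (fun x => ∫ s in (0:ℝ)..x, δ s) (Set.Icc 0 a) := by
    intro x hx y hy hxy
    have h1 := hdiff δ hδint x hx y hy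
    have h2 : 0 ≤ ∫ s in x..y, δ s := intervalIntegral.integral_nonneg hxy (fun s _ => hδ0 s)
    simp only
    linarith
  have hae : ∀ x ∈ Set.Icc (0:ℝ) a, ∀ y ∈ Set.Icc (0:ℝ) a,
      ∀ᵐ s ∂(volume.restrict (Set.Icc x y)), 0 ≤ w s ∧ w s ≤ ψ (c s) := by
    intro x hx y hy
    exact ae_mono (Measure.restrict_mono (Set.Icc_subset_Icc hx.1 hy.2) le_rfl) hw
  have hcm : MonotoneOn c (Set.Icc 0 a) := by
    intro x hx y hy hxy
    have h1 := hcd x hx y hy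
    have h2 : 0 ≤ ∫ s in x..y, δ s * w s := by
      apply intervalIntegral.integral_nonneg_of_ae_restrict hxy
      filter_upwards [hae x hx y hy] with s hs
      exact mul_nonneg (hδ0 s) hs.1
    have := mul_nonneg hlM.le h2
    linarith
  have hc0 : c 0 = lam * r := by simp [hc]
  have hcnn : ∀ x ∈ Set.Icc (0:ℝ) a, 0 ≤ c x := by
    intro x hx
    have := hcm h0 hx hx.1
    have := mul_nonneg hlam0.le hr
    linarith
  have hloc : ∀ x ∈ Set.Icc (0:ℝ) a, ∀ y ∈ Set.Icc (0:ℝ) a, x ≤ y →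
      c y - c x ≤ lam * M * ψ (c y) *
        ((∫ s in (0:ℝ)..y, δ s) - ∫ s in (0:ℝ)..x, δ s) := by
    intro x hx y hy hxy
    rw [hcd x hx y hy, hdiff δ hδint x hx y hy, mul_assoc (lam * M)]
    apply mul_le_mul_of_nonneg_left _ hlM.le
    rw [← intervalIntegral.integral_const_mul]
    apply intervalIntegral.integral_mono_ae_restrict hxy (hcr _ hwint x hx y hy)
      ((hcr _ hδint x hx y hy).const_mul _)
    filter_upwards [hae x hx y hy, ae_restrict_mem measurableSet_Icc] with s hs hsm
    have hsI : s ∈ Set.Icc (0:ℝ) a := ⟨hx.1.trans hsm.1, hsm.2.trans hy.2⟩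
    have h1 : ψ (c s) ≤ ψ (c y) := hψm (hcnn s hsI) (hcnn y hy) (hcm hsI hy hsm.2)
    have := mul_le_mul_of_nonneg_left (hs.2.trans h1) (hδ0 s)
    linarith
  intro t ht
  by_contra hcon
  push Not at hcon
  have hrt := hrR t ht
  have hgi : ∀ u v : ℝ, 0 < u → 0 < v →
      IntervalIntegrable (fun τ => (ψ τ)⁻¹) volume u v := by
    intro u v hu hv
    apply ContinuousOn.intervalIntegrable
    refine ContinuousOn.mono (s := Set.Ioi 0) ((hψc.mono Set.Ioi_subset_Ici_self).inv₀
      (fun x hx => (hψpos x hx).ne')) ?_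
    intro x hx
    exact lt_of_lt_of_le (lt_min hu hv) hx.1
  have hgnn : ∀ u v : ℝ, 0 ≤ u → u ≤ v → 0 ≤ ∫ τ in u..v, (ψ τ)⁻¹ := by
    intro u v hu huv
    exact intervalIntegral.integral_nonneg huv
      (fun τ hτ => inv_nonneg.2 (hψ0 τ (hu.trans hτ.1)))
  have hgpos : ∀ u v : ℝ, 0 < u → u < v → 0 < ∫ τ in u..v, (ψ τ)⁻¹ := by
    intro u v hu huv
    exact intervalIntegral.intervalIntegral_pos_of_pos_on (hgi u v hu (hu.trans huv))
      (fun τ hτ => inv_pos.2 (hψpos τ (hu.trans hτ.1))) huv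
  -- the constant `K` with `K * lam < 1`
  obtain ⟨K, hK1, hK2⟩ : ∃ K : ℝ, 1 < K ∧ K * lam < 1 := by
    obtain ⟨q, hq1, hq2⟩ := exists_between (one_lt_one_div hlam0 hlam1)
    exact ⟨q, hq1, by rwa [lt_div_iff₀ hlam0] at hq2⟩
  set J := ∫ τ in r..(R t), (ψ τ)⁻¹ with hJ
  have hBt := hBihari t ht
  have hKl : 0 < K * lam := by positivity
  have key : ∀ u, r < u → u < R t → ∫ τ in u..(R t), (ψ τ)⁻¹ ≤ K * lam * J := by
    intro u hru huR
    have hu0 : 0 < u := hr.trans_lt hru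
    have hmem : u ∈ Set.Icc (c 0) (c t) := by
      refine ⟨?_, huR.le.trans hcon⟩
      rw [hc0]
      nlinarith
    obtain ⟨s, hs, hsu⟩ := intermediate_value_Icc ht.1
      (hcc.mono (Set.Icc_subset_Icc_right ht.2)) hmem
    have hsub : Set.Icc s t ⊆ Set.Icc 0 a := Set.Icc_subset_Icc hs.1 ht.2
    have hsI : s ∈ Set.Icc (0:ℝ) a := ⟨hs.1, hs.2.trans ht.2⟩
    have hmain := bihari_aux hs.2 hlM.le hK1 δ c ψ (fun x => ∫ s in (0:ℝ)..x, δ s)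
      (hDc.mono hsub) (hcc.mono hsub) (hcm.mono hsub) (by rw [hsu]; exact hu0)
      hψc hψm hψpos (hDm.mono hsub)
      (fun x hx y hy hxy => hloc x (hsub hx) y (hsub hy) hxy)
    rw [hsu] at hmain
    have hR0 := hRpos t ht
    have hsplit := intervalIntegral.integral_add_adjacent_intervals
      (hgi u (R t) hu0 hR0) (hgi (R t) (c t) hR0 (hR0.trans_le hcon))
    have h1 := hgnn (R t) (c t) hR0.le hcon
    have h2 : 0 ≤ ∫ σ in (0:ℝ)..s, δ σ :=
      intervalIntegral.integral_nonneg hs.1 (fun σ _ => hδ0 σ)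
    have h3 := mul_le_mul_of_nonneg_left hBt hKl.le
    have h4 := mul_nonneg (mul_nonneg hKl.le hM.le) h2
    nlinarith
  obtain ⟨u, hu1, hu2⟩ := exists_between hrt
  have hJpos : 0 < J := by
    have h1 := hgpos u (R t) (hr.trans_lt hu1) hu2
    have h2 := key u hu1 hu2
    exact pos_of_mul_pos_right (h1.trans_le h2) hKl.le
  have hint : IntervalIntegrable (fun τ => (ψ τ)⁻¹) volume r (R t) := by
    by_contra hn
    rw [hJ, intervalIntegral.integral_undef hn] at hJpos
    exact lt_irrefl _ hJpos
  have hFc : ContinuousOn (fun x => ∫ τ in x..(R t), (ψ τ)⁻¹) (Set.Icc r (R t)) := by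
    have h := intervalIntegral.continuousOn_primitive_interval_left (μ := volume)
      (f := fun τ => (ψ τ)⁻¹) (a := r) (b := R t) (by
        rwa [intervalIntegrable_iff'] at hint)
    rwa [Set.uIcc_of_le hrt.le] at h
  have hlim : Filter.Tendsto (fun x => ∫ τ in x..(R t), (ψ τ)⁻¹)
      (nhdsWithin r (Set.Ioo r (R t))) (nhds J) :=
    (hFc r ⟨le_rfl, hrt.le⟩).mono Set.Ioo_subset_Icc_self
  rw [nhdsWithin_Ioo_eq_nhdsGT hrt] at hlim
  have hle : J ≤ K * lam * J := by
    refine le_of_tendsto hlim ?_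
    filter_upwards [Ioo_mem_nhdsGT hrt] with x hx
    exact key x hx.1 hx.2
  nlinarith
end

section
/- Vanishing lemma for a linear integral inequality (key step in the proof of Theorem 2.3): Let a > 0, b ∈ [0,a], let γ ∈ L¹(0,a) be nonnegative, and let A, B ≥ 0 be constants with (A + B)·∫₀ᵇ γ(s) ds < 1. If φ : [0,a] → ℝ is continuous, φ(t) ≥ 0 for all t, and φ(t) ≤ A·∫₀ᵇ γ(s)φ(s) ds + B·∫₀ᵗ γ(s)φ(s) ds for all t ∈ [0,a], then φ(t) = 0 for all t ∈ [0,a]. -/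
open MeasureTheory

/-- **Vanishing lemma for a linear integral inequality (key step in the proof of
Theorem 2.3).** If `(A + B)·∫₀ᵇ γ < 1` and a nonnegative continuous `φ` satisfies
`φ(t) ≤ A·∫₀ᵇ γφ + B·∫₀ᵗ γφ` on `[0,a]`, then `φ ≡ 0` on `[0,a]`. -/
theorem stmt_11
    {a b : ℝ} (ha : 0 < a) (hb : b ∈ Set.Icc (0:ℝ) a)
    (γ : ℝ → ℝ) (hγint : IntegrableOn γ (Set.Icc 0 a)) (hγ0 : ∀ t, 0 ≤ γ t)
    (A B : ℝ) (hA : 0 ≤ A) (hB : 0 ≤ B)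
    (hsmall : (A + B) * (∫ s in (0:ℝ)..b, γ s) < 1)
    (φ : ℝ → ℝ) (hφc : ContinuousOn φ (Set.Icc 0 a))
    (hφ0 : ∀ t ∈ Set.Icc (0:ℝ) a, 0 ≤ φ t)
    (hineq : ∀ t ∈ Set.Icc (0:ℝ) a,
      φ t ≤ A * (∫ s in (0:ℝ)..b, γ s * φ s) + B * ∫ s in (0:ℝ)..t, γ s * φ s) :
    ∀ t ∈ Set.Icc (0:ℝ) a, φ t = 0 := by
  have hmul : IntegrableOn (fun s => γ s * φ s) (Set.Icc 0 a) :=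
    hγint.mul_continuousOn hφc isCompact_Icc
  have sub : ∀ c d, 0 ≤ c → c ≤ d → d ≤ a → Set.uIcc c d ⊆ Set.Icc 0 a := by
    intro c d h0 h1 h2
    rw [Set.uIcc_of_le h1]
    exact Set.Icc_subset_Icc h0 h2
  have ig : ∀ c d, 0 ≤ c → c ≤ d → d ≤ a → IntervalIntegrable γ volume c d := fun c d h0 h1 h2 =>
    (hγint.mono_set (sub c d h0 h1 h2)).intervalIntegrable
  have im : ∀ c d, 0 ≤ c → c ≤ d → d ≤ a →
      IntervalIntegrable (fun s => γ s * φ s) volume c d := fun c d h0 h1 h2 =>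
    (hmul.mono_set (sub c d h0 h1 h2)).intervalIntegrable
  have nn : ∀ c d, 0 ≤ c → c ≤ d → d ≤ a → 0 ≤ ∫ s in c..d, γ s * φ s := by
    intro c d h0 h1 h2
    apply intervalIntegral.integral_nonneg h1
    intro u hu
    exact mul_nonneg (hγ0 u) (hφ0 u ⟨h0.trans hu.1, hu.2.trans h2⟩)
  have add : ∀ c d, 0 ≤ c → c ≤ d → d ≤ a → (∫ s in (0:ℝ)..d, γ s * φ s) =
      (∫ s in (0:ℝ)..c, γ s * φ s) + ∫ s in c..d, γ s * φ s := by
    intro c d h0 h1 h2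
    exact (intervalIntegral.integral_add_adjacent_intervals
      (im 0 c le_rfl h0 (h1.trans h2)) (im c d h0 h1 h2)).symm
  have bd : ∀ c d C, 0 ≤ c → c ≤ d → d ≤ a → (∀ t ∈ Set.Icc c d, φ t ≤ C) →
      (∫ s in c..d, γ s * φ s) ≤ C * ∫ s in c..d, γ s := by
    intro c d C h0 h1 h2 h
    rw [← intervalIntegral.integral_const_mul]
    apply intervalIntegral.integral_mono_on h1 (im c d h0 h1 h2) ((ig c d h0 h1 h2).const_mul C)
    intro x hx
    rw [mul_comm C]
    exact mul_le_mul_of_nonneg_left (h x hx) (hγ0 x)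
  have hGb : (∫ s in (0:ℝ)..b, γ s * φ s) = 0 := by
    have h1 := nn 0 b le_rfl hb.1 hb.2
    have h2 := bd 0 b ((A + B) * ∫ s in (0:ℝ)..b, γ s * φ s) le_rfl hb.1 hb.2 (by
      intro t ht
      have h3 := hineq t ⟨ht.1, ht.2.trans hb.2⟩
      have h4 := add t b ht.1 ht.2 hb.2
      have h5 := nn t b ht.1 ht.2 hb.2
      have h6 := mul_nonneg hB h5
      rw [h4] at h3 ⊢
      nlinarith)
    by_contra hne
    have hpos := lt_of_le_of_ne h1 (Ne.symm hne)
    nlinarith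
  have hin : ∀ t ∈ Set.Icc (0:ℝ) a, φ t ≤ B * ∫ s in (0:ℝ)..t, γ s * φ s := by
    intro t ht
    have := hineq t ht
    rw [hGb] at this
    linarith
  have hG : ContinuousOn (fun t => ∫ s in (0:ℝ)..t, γ s * φ s) (Set.Icc 0 a) :=
    intervalIntegral.continuousOn_primitive_interval (by rwa [Set.uIcc_of_le ha.le]) |>.mono
      (by rw [Set.uIcc_of_le ha.le])
  have hΓ : ContinuousOn (fun t => ∫ s in (0:ℝ)..t, γ s) (Set.Icc 0 a) :=
    intervalIntegral.continuousOn_primitive_interval (by rwa [Set.uIcc_of_le ha.le]) |>.mono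
      (by rw [Set.uIcc_of_le ha.le])
  have key : Set.Icc 0 a ⊆ {t | t ∈ Set.Icc 0 a ∧ (∫ s in (0:ℝ)..t, γ s * φ s) = 0} := by
    apply IsClosed.Icc_subset_of_forall_exists_gt
    · have h := hG.preimage_isClosed_of_isClosed isClosed_Icc (isClosed_singleton (x := (0:ℝ)))
      convert h using 1
      ext t
      simp only [Set.mem_inter_iff, Set.mem_setOf_eq, Set.mem_preimage, Set.mem_singleton_iff]
      tauto
    · exact ⟨⟨le_rfl, ha.le⟩, by simp⟩
    · rintro c ⟨⟨hc, hc0⟩, hca⟩ y hy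
      have hy' : c < min y a := lt_min hy hca.2
      have hsub : Set.Ioc c (min y a) ⊆ Set.Icc 0 a := fun t ht =>
        ⟨hc.1.trans ht.1.le, ht.2.trans (min_le_right _ _)⟩
      have hcw := ((hΓ c hc).mono (Set.Ioo_subset_Ioc_self.trans hsub))
      have hev : ∀ᶠ t in nhdsWithin c (Set.Ioo c (min y a)),
          B * ((∫ s in (0:ℝ)..t, γ s) - ∫ s in (0:ℝ)..c, γ s) < 1 := by
        have ht := (hcw.tendsto.sub_const (∫ s in (0:ℝ)..c, γ s)).const_mul B
        apply ht.eventually_lt_const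
        simp
      have hne : (nhdsWithin c (Set.Ioo c (min y a))).NeBot := left_nhdsWithin_Ioo_neBot hy'
      obtain ⟨d, hd1, hd⟩ := (hev.and self_mem_nhdsWithin).exists
      have hda := hsub (Set.Ioo_subset_Ioc_self hd)
      refine ⟨d, ⟨hda, ?_⟩, hd.1, hd.2.le.trans (min_le_left _ _)⟩
      have hcd := hd.1.le
      have e1 := intervalIntegral.integral_add_adjacent_intervals
        (ig 0 c le_rfl hc.1 hc.2) (ig c d hc.1 hcd hda.2)
      rw [← e1, add_sub_cancel_left] at hd1
      have e2 := add c d hc.1 hcd hda.2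
      rw [hc0, zero_add] at e2
      have h1 := nn 0 d le_rfl hda.1 hda.2
      have h2 := bd c d (B * ∫ s in (0:ℝ)..d, γ s * φ s) hc.1 hcd hda.2 (by
        intro t ht
        have ht0 := hc.1.trans ht.1
        have h3 := hin t ⟨ht0, ht.2.trans hda.2⟩
        have h4 := add t d ht0 ht.2 hda.2
        have h5 := nn t d ht0 ht.2 hda.2
        exact h3.trans (mul_le_mul_of_nonneg_left (by linarith) hB))
      rw [← e2] at h2
      by_contra hne
      have hpos := lt_of_le_of_ne h1 (Ne.symm hne)
      nlinarith
  intro t ht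
  have h := hin t ht
  rw [(key ht).2, mul_zero] at h
  exact le_antisymm h (hφ0 t ht)
end

section
/- Equicontinuity of dominated evolution integrals (established in the proof of Lemma 2.4): Let h ∈ L¹(0,a) be nonnegative and let D be the set of all strongly measurable functions g : [0,a] → X with ‖g(s)‖ ≤ h(s) for a.e. s ∈ [0,a]. Then the family of functions {v_g : g ∈ D}, where v_g(t) = ∫₀ᵗ T(t,s)g(s) ds (Bochner integral), is uniformly equicontinuous on [0,a]: for every ε > 0 there exists η > 0 such that for all g ∈ D and all t, t̄ ∈ [0,a] with |t − t̄| < η, ‖v_g(t) − v_g(t̄)‖ ≤ ε. -/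
open MeasureTheory

/-- **Equicontinuity of dominated evolution integrals (from the proof of Lemma 2.4).**
The family `v_g(t) = ∫₀ᵗ T(t,s)g(s) ds`, for `g` strongly measurable with `‖g‖ ≤ h` a.e.
on `[0,a]` (`h ∈ L¹` nonnegative), is uniformly equicontinuous on `[0,a]`. -/
theorem stmt_13
    {X : Type*} [NormedAddCommGroup X] [NormedSpace ℝ X] [CompleteSpace X]
    {a : ℝ} (ha : 0 < a)
    (T : ℝ → ℝ → X →L[ℝ] X)
    (hTcont : ContinuousOn (fun p : ℝ × ℝ => T p.1 p.2)
      {p : ℝ × ℝ | 0 ≤ p.2 ∧ p.2 ≤ p.1 ∧ p.1 ≤ a})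
    (hTid : ∀ s ∈ Set.Icc (0:ℝ) a, T s s = ContinuousLinearMap.id ℝ X)
    (hTsemi : ∀ s r t : ℝ, 0 ≤ s → s ≤ r → r ≤ t → t ≤ a → (T t r).comp (T r s) = T t s)
    {M : ℝ} (hM : 0 < M)
    (hTM : ∀ t s : ℝ, 0 ≤ s → s ≤ t → t ≤ a → ‖T t s‖ ≤ M)
    (h : ℝ → ℝ) (hhint : IntegrableOn h (Set.Icc 0 a)) (hh0 : ∀ t, 0 ≤ h t) :
    ∀ ε : ℝ, 0 < ε → ∃ η : ℝ, 0 < η ∧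
      ∀ g : ℝ → X, AEStronglyMeasurable g (volume.restrict (Set.Icc 0 a)) →
        (∀ᵐ s ∂(volume.restrict (Set.Icc 0 a)), ‖g s‖ ≤ h s) →
        ∀ t ∈ Set.Icc (0:ℝ) a, ∀ t' ∈ Set.Icc (0:ℝ) a, |t - t'| < η →
          ‖(∫ s in (0:ℝ)..t, T t s (g s)) - ∫ s in (0:ℝ)..t', T t' s (g s)‖ ≤ ε := by
  intro ε hε
  have hcompact : IsCompact {p : ℝ × ℝ | 0 ≤ p.2 ∧ p.2 ≤ p.1 ∧ p.1 ≤ a} := by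
    apply IsCompact.of_isClosed_subset (isCompact_Icc (a := ((0:ℝ),(0:ℝ))) (b := (a,a)))
    · exact (isClosed_le continuous_const continuous_snd).inter
        ((isClosed_le continuous_snd continuous_fst).inter
          (isClosed_le continuous_fst continuous_const))
    · rintro ⟨x, y⟩ ⟨h1, h2, h3⟩
      simp only at h1 h2 h3
      exact ⟨⟨h1.trans h2, h1⟩, ⟨h3, h2.trans h3⟩⟩
  have huc := hcompact.uniformContinuousOn_of_continuous hTcont
  rw [Metric.uniformContinuousOn_iff] at huc
  set K : ℝ := ∫ s in Set.Icc 0 a, h s with hK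
  have hK0 : 0 ≤ K := integral_nonneg hh0
  obtain ⟨δ, hδ, hδT⟩ := huc (ε / (2 * (K + 1))) (by positivity)
  have hHi : ∀ x ∈ Set.Icc (0:ℝ) a, ∀ y ∈ Set.Icc (0:ℝ) a, IntervalIntegrable h volume x y := by
    intro x hx y hy
    rw [intervalIntegrable_iff]
    refine hhint.mono_set (Set.uIoc_subset_uIcc.trans (Set.uIcc_subset_Icc hx hy))
  have hHc : ContinuousOn (fun x => ∫ s in (0:ℝ)..x, h s) (Set.Icc 0 a) :=
    intervalIntegral.continuousOn_primitive_interval (by rwa [Set.uIcc_of_le ha.le]) |>.mono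
      (by rw [Set.uIcc_of_le ha.le])
  have huH := isCompact_Icc.uniformContinuousOn_of_continuous hHc
  rw [Metric.uniformContinuousOn_iff] at huH
  obtain ⟨η, hη, hηH⟩ := huH (ε / (2 * M)) (by positivity)
  refine ⟨min δ η, lt_min hδ hη, ?_⟩
  intro g hg hgh
  have h0 : (0:ℝ) ∈ Set.Icc (0:ℝ) a := ⟨le_rfl, ha.le⟩
  have hint : ∀ t ∈ Set.Icc (0:ℝ) a, IntervalIntegrable (fun s => T t s (g s)) volume 0 t := by
    intro t ht
    rw [intervalIntegrable_iff_integrableOn_Icc_of_le ht.1]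
    have hsub : Set.Icc 0 t ⊆ Set.Icc 0 a := Set.Icc_subset_Icc_right ht.2
    have hc : ContinuousOn (fun s => T t s) (Set.Icc 0 t) := by
      apply hTcont.comp (f := fun s => (t, s)) (by fun_prop)
      intro s hs
      exact ⟨hs.1, hs.2, ht.2⟩
    have hm : AEStronglyMeasurable (fun s => T t s (g s)) (volume.restrict (Set.Icc 0 t)) :=
      isBoundedBilinearMap_apply.continuous.comp_aestronglyMeasurable
        ((hc.aestronglyMeasurable measurableSet_Icc).prodMk (hg.mono_set hsub))
    refine Integrable.mono' ((hhint.mono_set hsub).const_mul M) hm ?_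
    filter_upwards [ae_restrict_of_ae_restrict_of_subset hsub hgh,
      ae_restrict_mem measurableSet_Icc] with s hs hs'
    exact (T t s).le_of_opNorm_le_of_le (hTM t s hs'.1 hs'.2 ht.2) hs
  have key : ∀ t ∈ Set.Icc (0:ℝ) a, ∀ t' ∈ Set.Icc (0:ℝ) a, t' ≤ t → |t - t'| < min δ η →
      ‖(∫ s in (0:ℝ)..t, T t s (g s)) - ∫ s in (0:ℝ)..t', T t' s (g s)‖ ≤ ε := by
    intro t ht t' ht' hle hd
    have hi1 : IntervalIntegrable (fun s => T t s (g s)) volume 0 t' :=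
      (hint t ht).mono_set (by
        rw [Set.uIcc_of_le ht.1, Set.uIcc_of_le ht'.1]; exact Set.Icc_subset_Icc_right hle)
    have hi2 : IntervalIntegrable (fun s => T t s (g s)) volume t' t :=
      (hint t ht).mono_set (by
        rw [Set.uIcc_of_le ht.1, Set.uIcc_of_le hle]; exact Set.Icc_subset_Icc_left ht'.1)
    have hg' := (ae_restrict_iff' measurableSet_Icc).1 hgh
    rw [← intervalIntegral.integral_add_adjacent_intervals hi1 hi2, add_sub_right_comm,
      ← intervalIntegral.integral_sub hi1 (hint t' ht')]
    have e1 : ‖∫ s in (0:ℝ)..t', (T t s (g s) - T t' s (g s))‖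
        ≤ ∫ s in (0:ℝ)..t', ε / (2 * (K + 1)) * h s := by
      apply intervalIntegral.norm_integral_le_of_norm_le ht'.1 _ ((hHi 0 h0 t' ht').const_mul _)
      filter_upwards [hg'] with s hs hs'
      have hb := hδT (t, s) ⟨hs'.1.le, hs'.2.trans hle, ht.2⟩ (t', s) ⟨hs'.1.le, hs'.2, ht'.2⟩ (by
        rw [Prod.dist_eq]
        simpa [Real.dist_eq, hδ] using hd.trans_le (min_le_left _ _))
      rw [dist_eq_norm] at hb
      exact (T t s - T t' s).le_of_opNorm_le_of_le hb.le (hs ⟨hs'.1.le, hs'.2.trans ht'.2⟩)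
    have e2 : ‖∫ s in t'..t, T t s (g s)‖ ≤ ∫ s in t'..t, M * h s := by
      apply intervalIntegral.norm_integral_le_of_norm_le hle _ ((hHi t' ht' t ht).const_mul _)
      filter_upwards [hg'] with s hs hs'
      have h1 : 0 ≤ s := ht'.1.trans hs'.1.le
      exact (T t s).le_of_opNorm_le_of_le (hTM t s h1 hs'.2 ht.2) (hs ⟨h1, hs'.2.trans ht.2⟩)
    rw [intervalIntegral.integral_const_mul] at e1 e2
    have f1 : ∫ s in (0:ℝ)..t', h s ≤ K := by
      rw [intervalIntegral.integral_of_le ht'.1]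
      exact setIntegral_mono_set hhint (Filter.Eventually.of_forall hh0)
        (Filter.Eventually.of_forall fun s hs => ⟨hs.1.le, hs.2.trans ht'.2⟩)
    have f2 : ∫ s in t'..t, h s ≤ ε / (2 * M) := by
      have hb := hηH t ht t' ht' (by
        rw [Real.dist_eq]; exact hd.trans_le (min_le_right _ _))
      rw [Real.dist_eq, intervalIntegral.integral_interval_sub_left (hHi 0 h0 t ht)
        (hHi 0 h0 t' ht')] at hb
      exact (le_abs_self _).trans hb.le
    have g1 : ε / (2 * (K + 1)) * ∫ s in (0:ℝ)..t', h s ≤ ε / 2 := by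
      calc _ ≤ ε / (2 * (K + 1)) * (K + 1) := by gcongr; linarith
        _ = ε / 2 := by field_simp
    have g2 : M * ∫ s in t'..t, h s ≤ ε / 2 := by
      calc _ ≤ M * (ε / (2 * M)) := by gcongr
        _ = ε / 2 := by field_simp
    refine (norm_add_le _ _).trans ?_
    linarith
  intro t ht t' ht' hd
  rcases le_total t' t with hle | hle
  · exact key t ht t' ht' hle hd
  · rw [norm_sub_rev]
    exact key t' ht' t ht hle (by rwa [abs_sub_comm])
end

section
/- Invariance of the ball under condition (9): Let R > 0 be constant and Ū = {u ∈ C([0,a];X) : ‖u(t)‖ ≤ R for all t}. Assume (h1), (h2), and that there exist a nonnegative δ ∈ L¹(0,a) and a continuous nondecreasing ψ : [0,∞) → [0,∞) with ψ(s) > 0 for s > 0 such that ‖Φ(u)(t)‖ ≤ δ(t)ψ(‖u(t)‖) for a.e. t ∈ [0,a] and all u ∈ Ū, and R/ψ(R) ≥ M²‖BF‖·∫₀^{a_F} δ(s) ds + M·∫₀ᵃ δ(s) ds. Then N(Ū) ⊆ Ū, i.e. ‖N(u)(t)‖ ≤ R for every u ∈ Ū and every t ∈ [0,a]. -/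
open MeasureTheory

/-- The set `Ū` of continuous functions `u : [0,a] → X` with `‖u t‖ ≤ R t` for all `t`. -/
def UbarSet {X : Type*} [NormedAddCommGroup X] (a : ℝ) (R : ℝ → ℝ) :
    Set C(Set.Icc (0:ℝ) a, X) :=
  {u | ∀ t : Set.Icc (0:ℝ) a, ‖u t‖ ≤ R t}

/-- **Invariance of the ball under condition (9).** With `R > 0` constant, under (h1),
(h2) and the growth condition with `R/ψ(R) ≥ M²‖BF‖·∫₀^{a_F} δ + M·∫₀ᵃ δ`, the operator
`N` maps `Ū = B̄_C(0,R)` into itself. -/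
theorem stmt_14
    {X : Type*} [NormedAddCommGroup X] [NormedSpace ℝ X] [CompleteSpace X]
    {a : ℝ} (ha : 0 < a)
    (T : ℝ → ℝ → X →L[ℝ] X)
    (hTcont : ContinuousOn (fun p : ℝ × ℝ => T p.1 p.2)
      {p : ℝ × ℝ | 0 ≤ p.2 ∧ p.2 ≤ p.1 ∧ p.1 ≤ a})
    (hTid : ∀ s ∈ Set.Icc (0:ℝ) a, T s s = ContinuousLinearMap.id ℝ X)
    (hTsemi : ∀ s r t : ℝ, 0 ≤ s → s ≤ r → r ≤ t → t ≤ a → (T t r).comp (T r s) = T t s)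
    {M : ℝ} (hM : 0 < M)
    (hTM : ∀ t s : ℝ, 0 ≤ s → s ≤ t → t ≤ a → ‖T t s‖ ≤ M)
    -- the constant radius R
    (R : ℝ) (hR : 0 < R)
    -- (h1)
    (Φ : C(Set.Icc (0:ℝ) a, X) → ℝ → X)
    (hΦint : ∀ u ∈ UbarSet (X := X) a (fun _ => R), IntegrableOn (Φ u) (Set.Icc 0 a))
    (hΦcont : ∀ (v : ℕ → C(Set.Icc (0:ℝ) a, X)) (u : C(Set.Icc (0:ℝ) a, X)),
      (∀ n, v n ∈ UbarSet (X := X) a (fun _ => R)) → u ∈ UbarSet (X := X) a (fun _ => R) →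
      Filter.Tendsto (fun n => ‖v n - u‖) Filter.atTop (nhds 0) →
      Filter.Tendsto (fun n => ∫ s in Set.Icc (0:ℝ) a, ‖Φ (v n) s - Φ u s‖)
        Filter.atTop (nhds 0))
    -- (h2)
    (F : C(Set.Icc (0:ℝ) a, X) →L[ℝ] X) (B : X →L[ℝ] X)
    (W : X → C(Set.Icc (0:ℝ) a, X))
    (hW : ∀ (x : X) (t : Set.Icc (0:ℝ) a), W x t = T (t : ℝ) 0 x)
    (hBleft : ∀ x : X, B (x - F (W x)) = x)
    (hBright : ∀ x : X, B x - F (W (B x)) = x)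
    -- the support [0, a_F] of F
    {aF : ℝ} (haF : aF ∈ Set.Icc (0:ℝ) a)
    (hsupp : ∀ u v : C(Set.Icc (0:ℝ) a, X),
      (∀ t : Set.Icc (0:ℝ) a, (t : ℝ) ≤ aF → u t = v t) → F u = F v)
    -- the growth condition together with condition (9)
    (δ : ℝ → ℝ) (hδint : IntegrableOn δ (Set.Icc 0 a)) (hδ0 : ∀ t, 0 ≤ δ t)
    (ψ : ℝ → ℝ) (hψc : ContinuousOn ψ (Set.Ici 0)) (hψm : MonotoneOn ψ (Set.Ici 0))
    (hψ0 : ∀ s : ℝ, 0 ≤ s → 0 ≤ ψ s) (hψpos : ∀ s : ℝ, 0 < s → 0 < ψ s)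
    (hΦgrowth : ∀ u ∈ UbarSet (X := X) a (fun _ => R),
      ∀ᵐ t ∂(volume.restrict (Set.Icc 0 a)), ∀ ht : t ∈ Set.Icc (0:ℝ) a,
        ‖Φ u t‖ ≤ δ t * ψ ‖u ⟨t, ht⟩‖)
    (hRψ : M ^ 2 * ‖B.comp F‖ * (∫ s in (0:ℝ)..aF, δ s) + M * (∫ s in (0:ℝ)..a, δ s) ≤
      R / ψ R)
    -- the operator N of the problem
    (N : C(Set.Icc (0:ℝ) a, X) → C(Set.Icc (0:ℝ) a, X))
    (hN : ∀ u ∈ UbarSet (X := X) a (fun _ => R), ∃ v : C(Set.Icc (0:ℝ) a, X),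
      (∀ t : Set.Icc (0:ℝ) a, v t = ∫ s in (0:ℝ)..(t : ℝ), T (t : ℝ) s (Φ u s)) ∧
      ∀ t : Set.Icc (0:ℝ) a,
        N u t = T (t : ℝ) 0 (B (F v)) + ∫ s in (0:ℝ)..(t : ℝ), T (t : ℝ) s (Φ u s)) :
    -- conclusion: N(Ū) ⊆ Ū
    ∀ u ∈ UbarSet (X := X) a (fun _ => R), ∀ t : Set.Icc (0:ℝ) a, ‖N u t‖ ≤ R := by
  intro u hu t
  obtain ⟨v, hv, hNu⟩ := hN u hu
  have hψR := hψpos R hR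
  have hδi : ∀ b c : ℝ, 0 ≤ b → b ≤ c → c ≤ a → IntervalIntegrable δ volume b c := by
    intro b c hb hbc hc
    rw [intervalIntegrable_iff_integrableOn_Ioc_of_le hbc]
    exact hδint.mono_set (fun x hx => ⟨hb.trans hx.1.le, hx.2.trans hc⟩)
  have hg := (ae_restrict_iff' measurableSet_Icc).1 (hΦgrowth u hu)
  have key : ∀ t b : ℝ, 0 ≤ t → t ≤ b → b ≤ a →
      ‖∫ s in (0:ℝ)..t, T t s (Φ u s)‖ ≤ M * ψ R * ∫ s in (0:ℝ)..b, δ s := by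
    intro t b ht htb hb
    have h1 : ‖∫ s in (0:ℝ)..t, T t s (Φ u s)‖ ≤ ∫ s in (0:ℝ)..t, M * ψ R * δ s := by
      apply intervalIntegral.norm_integral_le_of_norm_le ht _
        ((hδi 0 t le_rfl ht (htb.trans hb)).const_mul _)
      filter_upwards [hg] with s hs hst
      have hsI : s ∈ Set.Icc (0:ℝ) a := ⟨hst.1.le, hst.2.trans (htb.trans hb)⟩
      have h2 := hs hsI hsI
      have h3 : ψ ‖u ⟨s, hsI⟩‖ ≤ ψ R :=
        hψm (norm_nonneg _) hR.le (hu ⟨s, hsI⟩)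
      calc ‖T t s (Φ u s)‖ ≤ ‖T t s‖ * ‖Φ u s‖ := (T t s).le_opNorm _
        _ ≤ M * (δ s * ψ R) := by
          apply mul_le_mul (hTM t s hst.1.le hst.2 (htb.trans hb)) _ (norm_nonneg _) hM.le
          exact h2.trans (mul_le_mul_of_nonneg_left h3 (hδ0 s))
        _ = M * ψ R * δ s := by ring
    rw [intervalIntegral.integral_const_mul] at h1
    refine h1.trans (mul_le_mul_of_nonneg_left ?_ (mul_pos hM hψR).le)
    rw [← intervalIntegral.integral_add_adjacent_intervals
      (hδi 0 t le_rfl ht (htb.trans hb)) (hδi t b ht htb hb)]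
    have := intervalIntegral.integral_nonneg (μ := volume) htb (fun x _ => hδ0 x)
    linarith
  have hIF : 0 ≤ ∫ s in (0:ℝ)..aF, δ s :=
    intervalIntegral.integral_nonneg haF.1 (fun x _ => hδ0 x)
  let cl : C(Set.Icc (0:ℝ) a, Set.Icc (0:ℝ) a) :=
    ⟨fun t => ⟨min (t : ℝ) aF, le_min t.2.1 haF.1, (min_le_left _ _).trans t.2.2⟩, by fun_prop⟩
  have hFv : F v = F (v.comp cl) := by
    apply hsupp
    intro t ht
    have : cl t = t := Subtype.ext (min_eq_left ht)
    simp [this]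
  have hnv : ‖v.comp cl‖ ≤ M * ψ R * ∫ s in (0:ℝ)..aF, δ s := by
    rw [ContinuousMap.norm_le _ (mul_nonneg (mul_pos hM hψR).le hIF)]
    intro t
    rw [ContinuousMap.comp_apply, hv]
    exact key _ _ (cl t).2.1 (min_le_right _ _) haF.2
  have hB : ‖B (F v)‖ ≤ ‖B.comp F‖ * (M * ψ R * ∫ s in (0:ℝ)..aF, δ s) := by
    rw [hFv]
    exact ((B.comp F).le_opNorm (v.comp cl)).trans
      (mul_le_mul_of_nonneg_left hnv (norm_nonneg _))
  have hT : ‖T (t : ℝ) 0 (B (F v))‖ ≤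
      M * (‖B.comp F‖ * (M * ψ R * ∫ s in (0:ℝ)..aF, δ s)) :=
    ((T (t : ℝ) 0).le_opNorm _).trans
      (mul_le_mul (hTM _ _ le_rfl t.2.1 t.2.2) hB (norm_nonneg _) hM.le)
  have hK := key t a t.2.1 t.2.2 le_rfl
  rw [le_div_iff₀ hψR] at hRψ
  rw [hNu]
  refine (norm_add_le _ _).trans ((add_le_add hT hK).trans (le_trans (le_of_eq ?_) hRψ))
  ring
end

section
/- Vector-valued vanishing lemma (key step in the proof of Theorem 3.1): Let a > 0, b ∈ [0,a], let G₀ be an n×n real matrix with nonnegative entries, and let γ, γ̃ : [0,a] → ℝ^{n×n} have nonnegative Lebesgue-integrable entries with γ̃_{ij}(t) ≤ γ_{ij}(t) for a.e. t and all i,j. Set H = 2·(G₀·Γ̃ + Γ), where Γ̃ = [∫₀ᵇ γ̃_{ij}(s) ds] and Γ = [∫₀ᵇ γ_{ij}(s) ds], and assume the spectral radius satisfies ρ(H) < 1. If φ : [0,a] → ℝⁿ is continuous with componentwise nonnegative values and φ(t) ≤ 2·G₀·∫₀ᵇ γ̃(s)φ(s) ds + 2·∫₀ᵗ γ(s)φ(s)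 ds componentwise for all t ∈ [0,a], then φ(t) = 0 for all t ∈ [0,a]. -/
open MeasureTheory

lemma aux_exists_pow {n : ℕ} (H : Matrix (Fin n) (Fin n) ℝ)
    (hρ : spectralRadius ℂ (H.map Complex.ofReal) < 1)
    (h0 : ∀ i j, 0 ≤ H i j) (v : Fin n → ℝ) (hv0 : ∀ i, 0 ≤ v i)
    (hv : ∀ i, v i ≤ ∑ j, H i j * v j) : v = 0 := by
  letI : NormedRing (Matrix (Fin n) (Fin n) ℂ) := Matrix.linftyOpNormedRing
  letI : NormedAlgebra ℂ (Matrix (Fin n) (Fin n) ℂ) := Matrix.linftyOpNormedAlgebra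
  haveI : CompleteSpace (Matrix (Fin n) (Fin n) ℂ) := FiniteDimensional.complete ℂ _
  have hG := spectrum.pow_nnnorm_pow_one_div_tendsto_nhds_spectralRadius (H.map Complex.ofReal)
  have hev := (hG.eventually_lt_const hρ).and (Filter.eventually_ge_atTop 1)
  obtain ⟨k, hk, hk1⟩ := hev.exists
  have hk2 : ‖(H.map Complex.ofReal) ^ k‖₊ < 1 := by
    by_contra hcon
    push Not at hcon
    have : (1 : ENNReal) ≤ (‖(H.map Complex.ofReal) ^ k‖₊ : ENNReal) := by exact_mod_cast hcon
    exact absurd hk (not_lt.mpr (ENNReal.one_le_rpow this (by positivity)))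
  have hpow : ∀ m : ℕ, ∀ i, v i ≤ ((H ^ m).mulVec v) i := by
    intro m
    induction m with
    | zero => intro i; simp
    | succ m ih =>
      intro i
      rw [pow_succ', ← Matrix.mulVec_mulVec]
      refine (hv i).trans ?_
      simp only [Matrix.mulVec, dotProduct]
      exact Finset.sum_le_sum fun j _ => mul_le_mul_of_nonneg_left (ih j) (h0 i j)
  have hmap : (H.map Complex.ofReal) ^ k = (H ^ k).map Complex.ofReal :=
    (map_pow (Complex.ofRealHom.mapMatrix (m := Fin n)) H k).symm
  set w : Fin n → ℂ := fun i => (v i : ℂ) with hw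
  have hAw : ((H.map Complex.ofReal) ^ k).mulVec w = fun i => (((H ^ k).mulVec v i : ℝ) : ℂ) := by
    rw [hmap]
    ext i
    simp [Matrix.mulVec, dotProduct, hw]
  have h1 : ‖w‖₊ ≤ ‖((H.map Complex.ofReal) ^ k).mulVec w‖₊ := by
    rw [hAw]
    refine pi_nnnorm_le_iff.mpr fun i => ?_
    refine le_trans ?_ (nnnorm_le_pi_nnnorm _ i)
    rw [← NNReal.coe_le_coe]
    simp only [coe_nnnorm, hw, Complex.norm_real]
    rw [Real.norm_of_nonneg (hv0 i), Real.norm_of_nonneg ((hv0 i).trans (hpow k i))]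
    exact hpow k i
  have h2 := h1.trans (Matrix.linfty_opNNNorm_mulVec _ _)
  have h3 : ‖w‖₊ = 0 := by
    by_contra hne
    have hpos : 0 < ‖w‖₊ := pos_iff_ne_zero.mpr hne
    have := mul_lt_mul_of_pos_right hk2 hpos
    rw [one_mul] at this
    exact absurd (h2.trans_lt this) (lt_irrefl _)
  have h4 : w = 0 := nnnorm_eq_zero.mp h3
  ext i
  have := congrFun h4 i
  simpa [hw] using this

lemma aux_gronwall {a : ℝ} (ha : 0 < a) (g ψ : ℝ → ℝ)
    (hg : IntegrableOn g (Set.Icc 0 a))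
    (hg0 : ∀ᵐ s ∂(volume.restrict (Set.Icc 0 a)), 0 ≤ g s)
    (hψc : ContinuousOn ψ (Set.Icc 0 a)) (hψ0 : ∀ t ∈ Set.Icc (0:ℝ) a, 0 ≤ ψ t)
    (h : ∀ t ∈ Set.Icc (0:ℝ) a, ψ t ≤ ∫ s in (0:ℝ)..t, g s * ψ s) :
    ∀ t ∈ Set.Icc (0:ℝ) a, ψ t = 0 := by
  have hgψ : IntegrableOn (fun s => g s * ψ s) (Set.Icc 0 a) :=
    hg.mul_continuousOn hψc isCompact_Icc
  have hII : ∀ f : ℝ → ℝ, IntegrableOn f (Set.Icc 0 a) → ∀ x ∈ Set.Icc 0 a, ∀ y ∈ Set.Icc 0 a,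
      IntervalIntegrable f volume x y := by
    intro f hf x hx y hy
    exact (hf.mono_set (Set.uIcc_subset_Icc hx hy)).intervalIntegrable
  have h0a : (0:ℝ) ∈ Set.Icc 0 a := ⟨le_rfl, ha.le⟩
  have hcont : ∀ f : ℝ → ℝ, IntegrableOn f (Set.Icc 0 a) →
      ContinuousOn (fun x => ∫ s in (0:ℝ)..x, f s) (Set.Icc 0 a) := by
    intro f hf
    have := intervalIntegral.continuousOn_primitive_interval (a := 0) (b := a) (f := f)
      (μ := volume) (by rwa [Set.uIcc_of_le ha.le])
    rwa [Set.uIcc_of_le ha.le] at this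
  have hae0 : ∀ᵐ s ∂(volume.restrict (Set.Icc 0 a)), 0 ≤ g s * ψ s := by
    filter_upwards [hg0, ae_restrict_mem measurableSet_Icc] with s hs hm
    exact mul_nonneg hs (hψ0 s hm)
  set F : ℝ → ℝ := fun x => ∫ s in (0:ℝ)..x, g s * ψ s with hF
  set G : ℝ → ℝ := fun x => ∫ s in (0:ℝ)..x, g s with hGdef
  have hsub : ∀ x ∈ Set.Icc 0 a, ∀ y ∈ Set.Icc 0 a, F y - F x = ∫ s in x..y, g s * ψ s := by
    intro x hx y hy
    have := intervalIntegral.integral_add_adjacent_intervals (hII _ hgψ 0 h0a x hx)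
      (hII _ hgψ x hx y hy)
    simp only [hF]; linarith
  have hsubG : ∀ x ∈ Set.Icc 0 a, ∀ y ∈ Set.Icc 0 a, G y - G x = ∫ s in x..y, g s := by
    intro x hx y hy
    have := intervalIntegral.integral_add_adjacent_intervals (hII _ hg 0 h0a x hx)
      (hII _ hg x hx y hy)
    simp only [hGdef]; linarith
  have hmono : ∀ x ∈ Set.Icc 0 a, ∀ y ∈ Set.Icc 0 a, x ≤ y → F x ≤ F y := by
    intro x hx y hy hxy
    have : 0 ≤ ∫ s in x..y, g s * ψ s :=
      intervalIntegral.integral_nonneg_of_ae_restrict hxy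
        (ae_restrict_of_ae_restrict_of_subset (Set.Icc_subset_Icc hx.1 hy.2) hae0)
    rw [← hsub x hx y hy] at this
    linarith
  have hkey : Set.Icc 0 a ⊆ {t | F t ≤ 0} := by
    apply IsClosed.Icc_subset_of_forall_mem_nhdsWithin
    · have := (hcont _ hgψ).preimage_isClosed_of_isClosed isClosed_Icc (isClosed_Iic (a := (0:ℝ)))
      rw [Set.inter_comm]
      exact this
    · simp [hF]
    · rintro x ⟨hx0, hx⟩
      have hxI : x ∈ Set.Icc 0 a := ⟨hx.1, hx.2.le⟩
      have hGc : Filter.Tendsto G (nhdsWithin x (Set.Ioc x a)) (nhds (G x)) :=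
        ((hcont _ hg) x hxI).mono_left
          (nhdsWithin_mono _ fun y hy => ⟨hx.1.trans hy.1.le, hy.2⟩)
      have hev : ∀ᶠ y in nhdsWithin x (Set.Ioc x a), G y < G x + 1 :=
        hGc.eventually_lt_const (by linarith)
      rw [← nhdsWithin_Ioc_eq_nhdsGT hx.2]
      filter_upwards [hev, self_mem_nhdsWithin] with y hy hyI
      have hyI' : y ∈ Set.Icc 0 a := ⟨hx.1.trans hyI.1.le, hyI.2⟩
      have h1 : ∫ s in x..y, g s * ψ s ≤ ∫ s in x..y, g s * F y := by
        apply intervalIntegral.integral_mono_ae_restrict hyI.1.le (hII _ hgψ x hxI y hyI')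
          ((hII _ hg x hxI y hyI').mul_const _)
        filter_upwards [ae_restrict_of_ae_restrict_of_subset (Set.Icc_subset_Icc hxI.1 hyI'.2) hg0,
          ae_restrict_mem measurableSet_Icc] with s hs hm
        have hsI : s ∈ Set.Icc 0 a := ⟨hx.1.trans hm.1, hm.2.trans hyI.2⟩
        exact mul_le_mul_of_nonneg_left ((h s hsI).trans (hmono s hsI y hyI' hm.2)) hs
      rw [intervalIntegral.integral_mul_const, ← hsub x hxI y hyI', ← hsubG x hxI y hyI'] at h1
      have hx0' : F x ≤ 0 := hx0
      show F y ≤ 0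
      by_contra hcon
      push Not at hcon
      nlinarith
  intro t ht
  exact le_antisymm ((h t ht).trans (hkey ht)) (hψ0 t ht)

/-- **Vector-valued vanishing lemma (key step in the proof of Theorem 3.1).** If
`H = 2(G₀·Γ̃ + Γ)` has spectral radius `< 1` and the continuous nonnegative vector
function `φ` satisfies `φ(t) ≤ 2G₀·∫₀ᵇ γ̃φ + 2∫₀ᵗ γφ` componentwise on `[0,a]`,
then `φ ≡ 0` on `[0,a]`. -/
theorem stmt_15
    {n : ℕ} {a b : ℝ} (ha : 0 < a) (hb : b ∈ Set.Icc (0:ℝ) a)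
    (G₀ : Matrix (Fin n) (Fin n) ℝ) (hG₀ : ∀ i j, 0 ≤ G₀ i j)
    (γ γt : ℝ → Matrix (Fin n) (Fin n) ℝ)
    (hγint : ∀ i j, IntegrableOn (fun s => γ s i j) (Set.Icc 0 a))
    (hγtint : ∀ i j, IntegrableOn (fun s => γt s i j) (Set.Icc 0 a))
    (hγ0 : ∀ i j, ∀ᵐ s ∂(volume.restrict (Set.Icc 0 a)), 0 ≤ γ s i j)
    (hγt0 : ∀ i j, ∀ᵐ s ∂(volume.restrict (Set.Icc 0 a)), 0 ≤ γt s i j)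
    (hγtγ : ∀ i j, ∀ᵐ s ∂(volume.restrict (Set.Icc 0 a)), γt s i j ≤ γ s i j)
    (hρ : spectralRadius ℂ
      ((2 • (G₀ * (Matrix.of fun i j => ∫ s in (0:ℝ)..b, γt s i j) +
        (Matrix.of fun i j => ∫ s in (0:ℝ)..b, γ s i j))).map Complex.ofReal) < 1)
    (φ : ℝ → Fin n → ℝ)
    (hφc : ∀ i, ContinuousOn (fun t => φ t i) (Set.Icc 0 a))
    (hφ0 : ∀ t ∈ Set.Icc (0:ℝ) a, ∀ i, 0 ≤ φ t i)
    (hineq : ∀ t ∈ Set.Icc (0:ℝ) a, ∀ i,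
      φ t i ≤ 2 * (∑ j, G₀ i j * ∫ s in (0:ℝ)..b, ∑ k, γt s j k * φ s k) +
        2 * ∫ s in (0:ℝ)..t, ∑ k, γ s i k * φ s k) :
    ∀ t ∈ Set.Icc (0:ℝ) a, φ t = 0 := by
  have hII : ∀ f : ℝ → ℝ, IntegrableOn f (Set.Icc 0 a) → ∀ y ∈ Set.Icc 0 a,
      IntervalIntegrable f volume 0 y := by
    intro f hf y hy
    exact (hf.mono_set (Set.uIcc_subset_Icc ⟨le_rfl, ha.le⟩ hy)).intervalIntegrable
  have hγφ : ∀ i k, IntegrableOn (fun s => γ s i k * φ s k) (Set.Icc 0 a) := fun i k =>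
    (hγint i k).mul_continuousOn (hφc k) isCompact_Icc
  have hγtφ : ∀ i k, IntegrableOn (fun s => γt s i k * φ s k) (Set.Icc 0 a) := fun i k =>
    (hγtint i k).mul_continuousOn (hφc k) isCompact_Icc
  -- maxima on `[0,b]`
  have hmax : ∀ i, ∃ x ∈ Set.Icc (0:ℝ) b, ∀ t ∈ Set.Icc (0:ℝ) b, φ t i ≤ φ x i := by
    intro i
    obtain ⟨x, hx, hm⟩ := isCompact_Icc.exists_isMaxOn (Set.nonempty_Icc.mpr hb.1)
      ((hφc i).mono (Set.Icc_subset_Icc_right hb.2))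
    exact ⟨x, hx, fun t ht => hm ht⟩
  choose x hx hxm using hmax
  have hba : Set.Icc (0:ℝ) b ⊆ Set.Icc 0 a := Set.Icc_subset_Icc_right hb.2
  set v : Fin n → ℝ := fun i => φ (x i) i with hv
  have hv0 : ∀ i, 0 ≤ v i := fun i => hφ0 _ (hba (hx i)) i
  have hbound : ∀ κ : ℝ → Matrix (Fin n) (Fin n) ℝ,
      (∀ i j, IntegrableOn (fun s => κ s i j) (Set.Icc 0 a)) →
      (∀ i j, ∀ᵐ s ∂(volume.restrict (Set.Icc 0 a)), 0 ≤ κ s i j) →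
      ∀ i, ∀ t ∈ Set.Icc (0:ℝ) b, ∫ s in (0:ℝ)..t, ∑ k, κ s i k * φ s k ≤
        ∑ k, (∫ s in (0:ℝ)..b, κ s i k) * v k := by
    intro κ hκ hκ0 i t ht
    rw [intervalIntegral.integral_finsetSum fun k _ =>
      hII _ ((hκ i k).mul_continuousOn (hφc k) isCompact_Icc) t (hba ht)]
    refine Finset.sum_le_sum fun k _ => ?_
    rw [← intervalIntegral.integral_mul_const]
    have hκb : IntervalIntegrable (fun s => κ s i k * v k) volume 0 b :=
      (hII _ (hκ i k) b hb).mul_const _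
    calc ∫ s in (0:ℝ)..t, κ s i k * φ s k ≤ ∫ s in (0:ℝ)..t, κ s i k * v k := by
          apply intervalIntegral.integral_mono_ae_restrict ht.1
            (hII _ ((hκ i k).mul_continuousOn (hφc k) isCompact_Icc) t (hba ht))
            ((hII _ (hκ i k) t (hba ht)).mul_const _)
          filter_upwards [ae_restrict_of_ae_restrict_of_subset
            (Set.Icc_subset_Icc_right (hba ht).2) (hκ0 i k),
            ae_restrict_mem measurableSet_Icc] with s hs hm
          exact mul_le_mul_of_nonneg_left (hxm k s ⟨hm.1, hm.2.trans ht.2⟩) hs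
      _ ≤ ∫ s in (0:ℝ)..b, κ s i k * v k := by
          apply intervalIntegral.integral_mono_interval le_rfl ht.1 ht.2 _ hκb
          refine ae_restrict_of_ae_restrict_of_subset
            (Set.Ioc_subset_Icc_self.trans (Set.Icc_subset_Icc_right hb.2)) ?_
          filter_upwards [hκ0 i k] with s hs
          exact mul_nonneg hs (hv0 k)
  have hint0 : ∀ κ : ℝ → Matrix (Fin n) (Fin n) ℝ,
      (∀ i j, ∀ᵐ s ∂(volume.restrict (Set.Icc 0 a)), 0 ≤ κ s i j) →
      ∀ i j, 0 ≤ ∫ s in (0:ℝ)..b, κ s i j := by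
    intro κ hκ0 i j
    exact intervalIntegral.integral_nonneg_of_ae_restrict hb.1
        (ae_restrict_of_ae_restrict_of_subset hba (hκ0 i j))
  have hvz : v = 0 := by
    refine aux_exists_pow _ hρ ?_ v hv0 ?_
    · intro i j
      simp only [Matrix.smul_apply, Matrix.add_apply, Matrix.mul_apply, Matrix.of_apply,
        nsmul_eq_mul]
      have h1 := hint0 γ hγ0 i j
      have h2 : 0 ≤ ∑ k, G₀ i k * ∫ s in (0:ℝ)..b, γt s k j :=
        Finset.sum_nonneg fun k _ => mul_nonneg (hG₀ i k) (hint0 γt hγt0 k j)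
      positivity
    · intro i
      have h1 := hineq (x i) (hba (hx i)) i
      have h2 := hbound γ hγint hγ0 i (x i) (hx i)
      have h3 : ∑ j, G₀ i j * ∫ s in (0:ℝ)..b, ∑ k, γt s j k * φ s k ≤
          ∑ j, G₀ i j * ∑ k, (∫ s in (0:ℝ)..b, γt s j k) * v k :=
        Finset.sum_le_sum fun j _ => mul_le_mul_of_nonneg_left
          (hbound γt hγtint hγt0 j b ⟨hb.1, le_rfl⟩) (hG₀ i j)
      have h4 : ∑ j, G₀ i j * ∑ k, (∫ s in (0:ℝ)..b, γt s j k) * v k =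
          ∑ k, (∑ j, G₀ i j * ∫ s in (0:ℝ)..b, γt s j k) * v k := by
        simp only [Finset.mul_sum, Finset.sum_mul]
        rw [Finset.sum_comm]
        exact Finset.sum_congr rfl fun _ _ => Finset.sum_congr rfl fun _ _ => by ring
      simp only [Matrix.smul_apply, Matrix.add_apply, Matrix.mul_apply, Matrix.of_apply,
        nsmul_eq_mul]
      have h5 : ∑ k, ((2:ℕ):ℝ) * ((∑ j, G₀ i j * ∫ s in (0:ℝ)..b, γt s j k) +
          ∫ s in (0:ℝ)..b, γ s i k) * v k =
          2 * (∑ k, (∑ j, G₀ i j * ∫ s in (0:ℝ)..b, γt s j k) * v k) +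
          2 * ∑ k, (∫ s in (0:ℝ)..b, γ s i k) * v k := by
        rw [Finset.mul_sum, Finset.mul_sum, ← Finset.sum_add_distrib]
        exact Finset.sum_congr rfl fun _ _ => by push_cast; ring
      rw [h5]
      change φ (x i) i ≤ _
      linarith
  have hφb : ∀ t ∈ Set.Icc (0:ℝ) b, ∀ i, φ t i = 0 := fun t ht i =>
    le_antisymm ((hxm i t ht).trans (congrFun hvz i).le) (hφ0 t (hba ht) i)
  have hzero : ∀ j, ∫ s in (0:ℝ)..b, ∑ k, γt s j k * φ s k = 0 := by
    intro j
    apply intervalIntegral.integral_zero_ae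
    refine Filter.Eventually.of_forall fun s hs => ?_
    rw [Set.uIoc_of_le hb.1] at hs
    simp [hφb s ⟨hs.1.le, hs.2⟩]
  simp only [hzero, mul_zero, Finset.sum_const_zero, zero_add] at hineq
  have hgr := aux_gronwall ha (fun s => ∑ i, ∑ k, 2 * γ s i k) (fun s => ∑ i, φ s i)
    (integrable_finsetSum _ fun i _ => integrable_finsetSum _ fun k _ => (hγint i k).const_mul 2)
    (by
      have : ∀ᵐ s ∂(volume.restrict (Set.Icc 0 a)), ∀ i j, 0 ≤ γ s i j :=
        ae_all_iff.mpr fun i => ae_all_iff.mpr fun j => hγ0 i j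
      filter_upwards [this] with s hs
      exact Finset.sum_nonneg fun i _ => Finset.sum_nonneg fun k _ => mul_nonneg two_pos.le (hs i k))
    (continuousOn_finsetSum _ fun i _ => hφc i)
    (fun t ht => Finset.sum_nonneg fun i _ => hφ0 t ht i)
    (by
      intro t ht
      have hi1 : ∀ i, IntegrableOn (fun s => ∑ k, γ s i k * φ s k) (Set.Icc 0 a) := fun i =>
        integrable_finsetSum _ fun k _ => hγφ i k
      have h1 : ∑ i, φ t i ≤ ∫ s in (0:ℝ)..t, ∑ i, 2 * ∑ k, γ s i k * φ s k := by
        rw [intervalIntegral.integral_finsetSum fun i _ => (hII _ (hi1 i) t ht).const_mul 2]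
        refine Finset.sum_le_sum fun i _ => ?_
        rw [intervalIntegral.integral_const_mul]
        exact hineq t ht i
      refine h1.trans ?_
      apply intervalIntegral.integral_mono_ae_restrict ht.1
      · exact hII _ (integrable_finsetSum _ fun i _ => (hi1 i).const_mul 2) t ht
      · refine hII _ (IntegrableOn.mul_continuousOn ?_ ?_ isCompact_Icc) t ht
        · exact integrable_finsetSum _ fun i _ =>
            integrable_finsetSum _ fun k _ => (hγint i k).const_mul 2
        · exact continuousOn_finsetSum _ fun i _ => hφc i
      · have : ∀ᵐ s ∂(volume.restrict (Set.Icc 0 a)), ∀ i j, 0 ≤ γ s i j :=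
          ae_all_iff.mpr fun i => ae_all_iff.mpr fun j => hγ0 i j
        filter_upwards [ae_restrict_of_ae_restrict_of_subset
          (Set.Icc_subset_Icc_right ht.2) this,
          ae_restrict_mem measurableSet_Icc] with s hs hm
        have hsI : s ∈ Set.Icc 0 a := ⟨hm.1, hm.2.trans ht.2⟩
        rw [Finset.sum_mul]
        refine Finset.sum_le_sum fun i _ => ?_
        rw [Finset.mul_sum, Finset.sum_mul]
        refine Finset.sum_le_sum fun k _ => ?_
        rw [← mul_assoc]
        exact mul_le_mul_of_nonneg_left
          (Finset.single_le_sum (f := fun k => φ s k) (fun j _ => hφ0 s hsI j)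
            (Finset.mem_univ k)) (mul_nonneg two_pos.le (hs i k)))
  intro t ht
  ext i
  exact (Finset.sum_eq_zero_iff_of_nonneg fun j _ => hφ0 t ht j).mp (hgr t ht) i
    (Finset.mem_univ i)
end
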